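/- arXiv:1104.5007 — 2 statements merged into one kernel-verified Lean document; each statement's English description precedes it below -/
import Mathlib

section
/- For every fixed odd integer k ≥ 5, with t := ⌊(k−2)/2⌋ = (k−3)/2, there exists a constant C_k such that for every integer n ≥ 1, the maximum number p_k(n) of 1-entries in an n×n (0,1)-matrix that is not (k+1)-full satisfies p_k(n) ≤ n·2^{(1/t!)·α(n)^t·log₂ α(n) + C_k·α(n)^t}. -/
/-! ## Inverse Ackermann hierarchy -/

/-- Bounded-fuel iteration counter: number of applications of `f` needed to bring `m`
down to a value `≤ 1` (assuming `f` strictly decreases on values `≥ 2`). -/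
def iterCount (f : ℕ → ℕ) : ℕ → ℕ → ℕ
  | 0, _ => 0
  | fuel + 1, m => if m ≤ 1 then 0 else 1 + iterCount f fuel (f m)

/-- The inverse Ackermann hierarchy: `alphaHier 1 m = ⌈m/2⌉`, `alphaHier d 1 = 0` for `d ≥ 2`,
and `alphaHier d m = 1 + alphaHier d (alphaHier (d-1) m)` for `m, d ≥ 2`. -/
def alphaHier : ℕ → ℕ → ℕ
  | 0, m => m
  | 1, m => (m + 1) / 2
  | d + 2, m => iterCount (alphaHier (d + 1)) m m

/-- The inverse Ackermann function `α(m) = min {k ≥ 1 : α_k(m) ≤ 3}`. -/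
noncomputable def invAck (m : ℕ) : ℕ := sInf {k : ℕ | 1 ≤ k ∧ alphaHier k m ≤ 3}

/-! ## Permutations, restrictions, VC-dimension -/

/-- The restriction of the `n`-permutation `π` to the (increasing) `k`-tuple of positions `a`
is the `k`-permutation `σ`. -/
def PermRestrictionIs {n k : ℕ} (π : Equiv.Perm (Fin n)) (a : Fin k → Fin n)
    (σ : Equiv.Perm (Fin k)) : Prop :=
  ∀ i j : Fin k, σ i < σ j ↔ π (a i) < π (a j)

/-- The `k`-tuple of positions `a` is shattered by the family `P` of `n`-permutations. -/
def Shatters {n k : ℕ} (P : Finset (Equiv.Perm (Fin n))) (a : Fin k → Fin n) : Prop :=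
  StrictMono a ∧ ∀ σ : Equiv.Perm (Fin k), ∃ π ∈ P, PermRestrictionIs π a σ

/-- The family `P` of `n`-permutations has VC-dimension at most `k`:
no `(k+1)`-tuple of positions is shattered by `P`. -/
def VCDimLE (n k : ℕ) (P : Finset (Equiv.Perm (Fin n))) : Prop :=
  ∀ a : Fin (k + 1) → Fin n, ¬ Shatters P a

/-- The number of `1`-entries of the union of the permutation matrices of a family `P`
of `n`-permutations. -/
noncomputable def permOnes {n : ℕ} (P : Finset (Equiv.Perm (Fin n))) : ℕ :=
  Nat.card {p : Fin n × Fin n // ∃ π ∈ P, π p.2 = p.1}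

/-- `v(P) = |M_P| / n`, the average number of `1`-entries per column of the union
of the permutation matrices of the family `P`. -/
noncomputable def vPerm {n : ℕ} (P : Finset (Equiv.Perm (Fin n))) : ℝ :=
  (permOnes P : ℝ) / (n : ℝ)

/-! ## (0,1)-matrices -/

/-- The number of `1`-entries of a `(0,1)`-matrix (represented as a `Bool` matrix). -/
noncomputable def matOnes {m n : ℕ} (M : Fin m → Fin n → Bool) : ℕ :=
  Nat.card {p : Fin m × Fin n // M p.1 p.2 = true}

/-- The number of `1`-entries in column `j` of a `(0,1)`-matrix. -/
noncomputable def colOnes {m n : ℕ} (M : Fin m → Fin n → Bool) (j : Fin n) : ℕ :=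
  Nat.card {i : Fin m // M i j = true}

/-- The matrix `B` contains the matrix `S`. -/
def MatContains {m n p q : ℕ} (B : Fin m → Fin n → Bool) (S : Fin p → Fin q → Bool) : Prop :=
  ∃ (r : Fin p → Fin m) (c : Fin q → Fin n), StrictMono r ∧ StrictMono c ∧
    ∀ a b, S a b = true → B (r a) (c b) = true

/-- The `s × 2` matrix `DS_s`, with a `1`-entry in (1-indexed) row `i` and column `j`
exactly when `i + j` is odd. -/
def DS (s : ℕ) : Fin s → Fin 2 → Bool :=
  fun i j => decide ((i.val + j.val) % 2 = 1)

/-- The maximum number of `1`-entries in an `n × n` matrix avoiding `S`. -/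
noncomputable def exMat {p q : ℕ} (S : Fin p → Fin q → Bool) (n : ℕ) : ℕ :=
  sSup {x : ℕ | ∃ M : Fin n → Fin n → Bool, ¬ MatContains M S ∧ matOnes M = x}

/-- An `n × n` matrix is `k`-full if some increasing `k`-tuple of columns contains
every `k`-permutation matrix. -/
def IsFull (k : ℕ) {n : ℕ} (M : Fin n → Fin n → Bool) : Prop :=
  ∃ c : Fin k → Fin n, StrictMono c ∧ ∀ σ : Equiv.Perm (Fin k),
    ∃ r : Fin k → Fin n, StrictMono r ∧ ∀ b : Fin k, M (r (σ b)) (c b) = true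

/-- `pFull k n` is the maximum number of `1`-entries in an `n × n` matrix that is
not `(k+1)`-full. -/
noncomputable def pFull (k n : ℕ) : ℕ :=
  sSup {x : ℕ | ∃ M : Fin n → Fin n → Bool, ¬ IsFull (k + 1) M ∧ matOnes M = x}

/-! ## Formations -/

/-- `M` contains a `B`-fat `(r,s)`-formation: there are an `s`-partition of the rows into
intervals (the fibers of a monotone map `g`) and `r` columns, each having at least `B`
`1`-entries in every interval. -/
def FatFormation (B r s : ℕ) {m n : ℕ} (M : Fin m → Fin n → Bool) : Prop :=
  ∃ g : Fin m → Fin s, Monotone g ∧ ∃ c : Fin r → Fin n, StrictMono c ∧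
    ∀ (j : Fin r) (i : Fin s), B ≤ Nat.card {x : Fin m // g x = i ∧ M x (c j) = true}

/-- `M` contains a doubled `(r,s)`-formation: there are an `s`-partition of the rows into
intervals and `r` columns, each having at least one `1`-entry in the first and last
interval and at least two `1`-entries in every other interval. -/
def DoubledFormation (r s : ℕ) {m n : ℕ} (M : Fin m → Fin n → Bool) : Prop :=
  ∃ g : Fin m → Fin s, Monotone g ∧ ∃ c : Fin r → Fin n, StrictMono c ∧
    ∀ (j : Fin r) (i : Fin s),
      1 ≤ Nat.card {x : Fin m // g x = i ∧ M x (c j) = true} ∧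
      (i.val ≠ 0 → i.val ≠ s - 1 → 2 ≤ Nat.card {x : Fin m // g x = i ∧ M x (c j) = true})

/-! ## The functions R, D, β -/

/-- Nivasch's hierarchy `R_s(d)` (shifted as in the paper). -/
def Rfun : ℕ → ℕ → ℕ
  | 0, _ => 0
  | 1, _ => 0
  | 2, _ => 2
  | 3, _ => 3
  | 4, d => 2 * d + 1
  | _ + 5, 0 => 0
  | _ + 5, 1 => 0
  | s + 5, 2 => 2 ^ (s + 3) + 1
  | s + 5, d + 3 =>
      2 * (Rfun (s + 4) (d + 3) - 1) + (Rfun (s + 3) (d + 3) - 1) * (Rfun (s + 5) (d + 2) - 3) + 1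
  termination_by s d => (s, d)

/-- The hierarchy `D_s(d)`. -/
def Dfun : ℕ → ℕ → ℕ
  | 0, _ => 0
  | 1, _ => 0
  | 2, _ => 2
  | _ + 3, 0 => 0
  | _ + 3, 1 => 0
  | s + 3, 2 => 2 ^ (s + 2) + 2 ^ (s + 1) - 1
  | s + 3, d + 3 =>
      2 * Dfun (s + 2) (d + 3) + (Dfun (s + 1) (d + 3) + 1) * (Rfun (s + 3) (d + 2) - 3)
        + Dfun (s + 3) (d + 2) - Rfun (s + 3) (d + 2) + 1
  termination_by s d => (s, d)

/-- `β_s(m) = D_s(α(m))`. -/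
noncomputable def betaFun (s m : ℕ) : ℕ := Dfun s (invAck m)

/-! ## Sequences: MST and formations in sequences -/

/-- The list of column indices of the `1`-entries of a row, in increasing order. -/
def rowList {n : ℕ} (row : Fin n → Bool) : List (Fin n) :=
  (List.finRange n).filter (fun j => row j)

/-- The matrix → sequence transformation: read the rows top to bottom, writing for each
`1`-entry the index of its column. -/
def MST {m n : ℕ} (M : Fin m → Fin n → Bool) : List (Fin n) :=
  ((List.finRange m).map (fun i => rowList (M i))).flatten

/-- The list `L` contains an `(r,s)`-formation as a subsequence: a concatenation of `s`
permutations of the same `r`-element set of symbols is a sublist of `L`. -/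
def IsFormationSeq {A : Type*} [DecidableEq A] (r s : ℕ) (L : List A) : Prop :=
  ∃ (T : Finset A) (F : List (List A)), T.card = r ∧ F.length = s ∧
    (∀ l ∈ F, l.Nodup ∧ l.toFinset = T) ∧ List.Sublist F.flatten L


/-! Read a matrix that is not `(k + 1)`-full as a family of columns, each a set of rows, no `k + 1`
of which alternate `k + 1` times. Cut the rows into blocks. A column with more than
`2 * p₁ + p₂ * p₃` entries either has more than `p₃` entries in some block, which is then its only,
first, last or middle block (in the last three cases its entries outside force shorter formations
inside), or it meets more than `p₂` blocks, and contracting the blocks keeps it heavy. With block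
sizes chosen along the inverse Ackermann hierarchy, this shows that few columns are heavier than
`threshold (k - 1) (invAck n)`, and the logarithm of `threshold` satisfies a recursion whose
solution is the exponent of the bound. -/

open Finset

/-! ### The inverse Ackermann hierarchy -/

theorem iterCount_eq_of_le {f : ℕ → ℕ} (hf : ∀ m, 2 ≤ m → f m < m) {m a b : ℕ}
    (ha : m ≤ a) (hb : m ≤ b) : iterCount f a m = iterCount f b m := by
  induction m using Nat.strong_induction_on generalizing a b with
  | _ m ih =>
    by_cases hm : m ≤ 1
    · cases a <;> cases b <;> simp [iterCount, hm]
    · obtain ⟨a, rfl⟩ := Nat.exists_eq_add_one.2 (show 0 < a by omega)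
      obtain ⟨b, rfl⟩ := Nat.exists_eq_add_one.2 (show 0 < b by omega)
      have hlt := hf m (by omega)
      simp only [iterCount, hm, if_false]
      rw [ih (f m) hlt (a := a) (b := b) (by omega) (by omega)]

theorem alphaHier_add_two_of_le_one (d : ℕ) {m : ℕ} (hm : m ≤ 1) : alphaHier (d + 2) m = 0 := by
  interval_cases m <;> simp [alphaHier, iterCount]

theorem alphaHier_add_two_of_lt {d : ℕ} (hlt : ∀ m, 2 ≤ m → alphaHier (d + 1) m < m) {m : ℕ}
    (hm : 2 ≤ m) : alphaHier (d + 2) m = 1 + alphaHier (d + 2) (alphaHier (d + 1) m) := by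
  obtain ⟨m, rfl⟩ := Nat.exists_eq_add_one.2 (show 0 < m by omega)
  have hm' := hlt (m + 1) hm
  rw [alphaHier, alphaHier, iterCount, if_neg (by omega),
    iterCount_eq_of_le hlt (by omega) le_rfl]

theorem alphaHier_succ_le_half (d m : ℕ) : alphaHier (d + 1) m ≤ (m + 1) / 2 := by
  induction d generalizing m with
  | zero => simp only [alphaHier]; omega
  | succ d ihd =>
    induction m using Nat.strong_induction_on with
    | _ m ihm =>
      change alphaHier (d + 2) m ≤ (m + 1) / 2
      by_cases hm : m ≤ 1
      · simp [alphaHier_add_two_of_le_one d hm]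
      have hhalf := ihd m
      have hrec : alphaHier (d + 2) m = 1 + alphaHier (d + 2) (alphaHier (d + 1) m) :=
        alphaHier_add_two_of_lt (fun l hl ↦ (ihd l).trans_lt (by omega)) (by omega)
      by_cases hsmall : alphaHier (d + 1) m ≤ 1
      · have hzero := alphaHier_add_two_of_le_one d hsmall
        omega
      · have hnext : alphaHier (d + 2) (alphaHier (d + 1) m) ≤ (alphaHier (d + 1) m + 1) / 2 :=
          ihm _ (by omega)
        omega

theorem alphaHier_succ_lt_self (d : ℕ) {m : ℕ} (hm : 2 ≤ m) : alphaHier (d + 1) m < m :=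
  (alphaHier_succ_le_half d m).trans_lt (by omega)

theorem alphaHier_add_two (d : ℕ) {m : ℕ} (hm : 2 ≤ m) :
    alphaHier (d + 2) m = 1 + alphaHier (d + 2) (alphaHier (d + 1) m) :=
  alphaHier_add_two_of_lt (fun _ ↦ alphaHier_succ_lt_self d) hm

theorem monotone_alphaHier_succ (d : ℕ) : Monotone (alphaHier (d + 1)) := by
  induction d with
  | zero => intro a b hab; simp only [alphaHier]; omega
  | succ d ihd =>
    intro a b hab
    induction b using Nat.strong_induction_on generalizing a with
    | _ b ihb =>
      by_cases ha : a ≤ 1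
      · simp [alphaHier_add_two_of_le_one d ha]
      · rw [alphaHier_add_two d (by omega : 2 ≤ a), alphaHier_add_two d (by omega : 2 ≤ b)]
        exact Nat.add_le_add_left
          (ihb _ (alphaHier_succ_lt_self d (by omega)) (ihd hab)) 1

theorem alphaHier_add_two_lt {d m : ℕ} (h : 4 ≤ alphaHier (d + 1) m) :
    alphaHier (d + 2) m < alphaHier (d + 1) m := by
  have hm := alphaHier_succ_le_half d m
  have hhalf : alphaHier (d + 2) (alphaHier (d + 1) m) ≤ (alphaHier (d + 1) m + 1) / 2 :=
    alphaHier_succ_le_half (d + 1) _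
  rw [alphaHier_add_two d (by omega)]
  omega

theorem exists_alphaHier_le_three (m : ℕ) : ∃ k, 1 ≤ k ∧ alphaHier k m ≤ 3 := by
  by_contra! hlarge
  have hdrop : ∀ d, alphaHier (d + 1) m + d ≤ alphaHier 1 m := by
    intro d
    induction d with
    | zero => rfl
    | succ d ih =>
      have hlt : alphaHier (d + 1 + 1) m < alphaHier (d + 1) m :=
        alphaHier_add_two_lt (hlarge (d + 1) (by omega))
      omega
  have hzero := hdrop (alphaHier 1 m)
  have hfour := hlarge (alphaHier 1 m + 1) (by omega)
  omega

theorem one_le_invAck_and_alphaHier_invAck_le (m : ℕ) :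
    1 ≤ invAck m ∧ alphaHier (invAck m) m ≤ 3 :=
  Nat.sInf_mem (s := {k | 1 ≤ k ∧ alphaHier k m ≤ 3}) (exists_alphaHier_le_three m)

/-! ### Set systems avoiding formations -/

/-- The family of columns `S c`, `c ∈ C`, each given by the set of rows of its `1`-entries, has no
`(r, s)`-formation: there are no `r` columns and no partition of the rows into `s` intervals such
that every one of these columns meets every interval. The intervals are the fibers of a monotone
map `g` over `0, …, s - 1`. Indexing the columns by `ι` allows repeated columns. -/
def AvoidsFormation {ι α : Type*} [Preorder α] (r s : ℕ) (C : Finset ι) (S : ι → Finset α) : Prop :=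
  ∀ T ⊆ C, #T = r → ∀ g : α → ℕ, Monotone g → ¬ ∀ c ∈ T, ∀ i < s, ∃ x ∈ S c, g x = i

namespace AvoidsFormation

variable {ι α β : Type*} [Preorder α] [Preorder β] {r s : ℕ} {C C' : Finset ι}
  {S S' : ι → Finset α}

theorem mono (h : AvoidsFormation r s C S) (hC : C' ⊆ C) (hS : ∀ c ∈ C', S' c ⊆ S c) :
    AvoidsFormation r s C' S' := by
  intro T hT hr g hg hform
  refine h T (hT.trans hC) hr g hg fun c hc i hi ↦ ?_
  obtain ⟨x, hx, hxi⟩ := hform c hc i hi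
  exact ⟨x, hS c (hT hc) hx, hxi⟩

theorem image [DecidableEq β] (h : AvoidsFormation r s C S) {q : α → β} (hq : Monotone q) :
    AvoidsFormation r s C fun c ↦ (S c).image q := by
  intro T hT hr g hg hform
  refine h T hT hr (g ∘ q) (hg.comp hq) fun c hc i hi ↦ ?_
  obtain ⟨_, hx, hxi⟩ := hform c hc i hi
  obtain ⟨y, hy, rfl⟩ := mem_image.1 hx
  exact ⟨y, hy, hxi⟩

theorem of_isLowerSet (h : AvoidsFormation r (s + 1) C S) {A : Set α} (hA : IsLowerSet A)
    (hS : ∀ c ∈ C, ∀ x ∈ S' c, x ∈ S c ∧ x ∈ A) (hout : ∀ c ∈ C, ∃ y ∈ S c, y ∉ A) :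
    AvoidsFormation r s C S' := by
  classical
  intro T hT hr g hg hform
  refine h T hT hr (fun x ↦ if x ∈ A then min (g x) s else s) (fun x y hxy ↦ ?_)
    fun c hc i hi ↦ ?_
  · have hgxy := hg hxy
    by_cases hy : y ∈ A
    · simp only [hy, hA hxy hy, if_true]
      omega
    · simp only [hy, if_false]
      split_ifs <;> omega
  · obtain hi | rfl := Nat.lt_succ_iff_lt_or_eq.1 hi
    · obtain ⟨x, hx, rfl⟩ := hform c hc i hi
      obtain ⟨hxS, hxA⟩ := hS c (hT hc) x hx
      exact ⟨x, hxS, by simp only [hxA, if_true]; omega⟩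
    · obtain ⟨y, hy, hyA⟩ := hout c (hT hc)
      exact ⟨y, hy, if_neg hyA⟩

theorem of_isUpperSet (h : AvoidsFormation r (s + 1) C S) {A : Set α} (hA : IsUpperSet A)
    (hS : ∀ c ∈ C, ∀ x ∈ S' c, x ∈ S c ∧ x ∈ A) (hout : ∀ c ∈ C, ∃ y ∈ S c, y ∉ A) :
    AvoidsFormation r s C S' := by
  classical
  intro T hT hr g hg hform
  refine h T hT hr (fun x ↦ if x ∈ A then g x + 1 else 0) (fun x y hxy ↦ ?_)
    fun c hc i hi ↦ ?_
  · by_cases hx : x ∈ A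
    · simpa only [hx, hA hxy hx, if_true] using Nat.succ_le_succ (hg hxy)
    · simp only [hx, if_false, Nat.zero_le]
  · obtain _ | i := i
    · obtain ⟨y, hy, hyA⟩ := hout c (hT hc)
      exact ⟨y, hy, if_neg hyA⟩
    · obtain ⟨x, hx, rfl⟩ := hform c hc i (by omega)
      obtain ⟨hxS, hxA⟩ := hS c (hT hc) x hx
      exact ⟨x, hxS, if_pos hxA⟩

/-- Two chunks of one column cannot both take part in a formation with at least two intervals. -/
theorem sigma (h : AvoidsFormation r s C S) (hs : 2 ≤ s) {n : ι → ℕ} {B : ι → ℕ → Finset α}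
    (hB : ∀ c ∈ C, ∀ j < n c, B c j ⊆ S c)
    (hlt : ∀ c i j, i < j → ∀ x ∈ B c i, ∀ y ∈ B c j, x < y) :
    AvoidsFormation r s (C.sigma fun c ↦ range (n c)) fun z ↦ B z.1 z.2 := by
  classical
  intro T hT hr g hg hform
  have hnot_lt : ∀ z ∈ T, ∀ w ∈ T, z.1 = w.1 → ¬ z.2 < w.2 := by
    rintro ⟨c, i⟩ hz ⟨_, j⟩ hw rfl hij
    obtain ⟨x, hx, hgx⟩ := hform _ hz 1 hs
    obtain ⟨y, hy, hgy⟩ := hform _ hw 0 (by omega)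
    have := hg (hlt c i j hij x hx y hy).le
    omega
  have hinj : Set.InjOn Sigma.fst (T : Set (Σ _ : ι, ℕ)) := fun z hz w hw hzw ↦
    Sigma.ext hzw (heq_of_eq (le_antisymm (not_lt.1 (hnot_lt w hw z hz hzw.symm))
      (not_lt.1 (hnot_lt z hz w hw hzw))))
  refine h (T.image Sigma.fst) ?_ (by rw [card_image_of_injOn hinj, hr]) g hg ?_
  · exact image_subset_iff.2 fun z hz ↦ (mem_sigma.1 (hT hz)).1
  · intro c hc i hi
    obtain ⟨z, hz, rfl⟩ := mem_image.1 hc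
    obtain ⟨x, hx, hxi⟩ := hform z hz i hi
    obtain ⟨hzC, hzn⟩ := mem_sigma.1 (hT hz)
    exact ⟨x, hB z.1 hzC z.2 (mem_range.1 hzn) hx, hxi⟩

end AvoidsFormation

/-! ### Columns concentrated in a block of rows -/

/-- The column with `1`-entries in the rows `S` is heavy in the block `G` of the block map `q`: it
lies inside the block, or it has more than `p₁` entries there and a further one in a later (or in
an earlier) block, or it has more than `p₂` entries there and further ones on both sides. -/
def IsHeavyAt {α β : Type*} [LinearOrder β] (q : α → β) (p₁ p₂ : ℕ) (S : Finset α) (G : β) : Prop :=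
  (∀ x ∈ S, q x = G) ∨
  (p₁ < #{x ∈ S | q x = G} ∧ ∃ y ∈ S, G < q y) ∨
  (p₁ < #{x ∈ S | q x = G} ∧ ∃ y ∈ S, q y < G) ∨
  (p₂ < #{x ∈ S | q x = G} ∧ (∃ y ∈ S, q y < G) ∧ ∃ y ∈ S, G < q y)

/-- Otherwise the first and the last block contain at most `p₁` entries each, and each of the at
most `p₃` remaining blocks contains at most `p₂`. -/
theorem exists_isHeavyAt_or_lt_card_image {α β : Type*} [LinearOrder β] {S : Finset α} {q : α → β}
    {p₁ p₂ p₃ : ℕ} (hcard : 2 * p₁ + p₂ * p₃ < #S) :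
    (∃ x ∈ S, IsHeavyAt q p₁ p₂ S (q x)) ∨ p₃ < #(S.image q) := by
  classical
  by_contra! hlight
  obtain ⟨hlight, himage⟩ := hlight
  have hne : S.Nonempty := card_pos.1 (by omega)
  obtain ⟨x₀, hx₀, hmin⟩ := S.exists_min_image q hne
  obtain ⟨x₁, hx₁, hmax⟩ := S.exists_max_image q hne
  have hlt : q x₀ < q x₁ := by
    refine lt_of_le_of_ne (hmin x₁ hx₁) fun heq ↦ hlight x₀ hx₀ (.inl fun x hx ↦ ?_)
    exact le_antisymm ((hmax x hx).trans heq.ge) (hmin x hx)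
  have hfirst : #{x ∈ S | q x = q x₀} ≤ p₁ := not_lt.1 fun h ↦
    hlight x₀ hx₀ (.inr (.inl ⟨h, x₁, hx₁, hlt⟩))
  have hlast : #{x ∈ S | q x = q x₁} ≤ p₁ := not_lt.1 fun h ↦
    hlight x₁ hx₁ (.inr (.inr (.inl ⟨h, x₀, hx₀, hlt⟩)))
  have hmiddle : #{x ∈ S | q x₀ < q x ∧ q x < q x₁} ≤ p₂ * p₃ := by
    refine (card_le_mul_card_image (f := q) _ p₂ fun G hG ↦ ?_).trans
      (Nat.mul_le_mul_left _ ((card_le_card (image_subset_image (filter_subset _ _))).trans himage))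
    obtain ⟨x, hx, rfl⟩ := mem_image.1 hG
    obtain ⟨hx, hx₀x, hxx₁⟩ := mem_filter.1 hx
    refine (card_le_card (filter_subset_filter _ (filter_subset _ _))).trans (not_lt.1 fun h ↦ ?_)
    exact hlight x hx (.inr (.inr (.inr ⟨h, ⟨x₀, hx₀, hx₀x⟩, x₁, hx₁, hxx₁⟩)))
  have hcover : S ⊆ ({x ∈ S | q x = q x₀} ∪ {x ∈ S | q x = q x₁}) ∪
      {x ∈ S | q x₀ < q x ∧ q x < q x₁} := by
    intro x hx
    have hx₀x := hmin x hx
    have hxx₁ := hmax x hx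
    simp only [mem_union, mem_filter, hx, true_and]
    grind
  have hsplit := (card_le_card hcover).trans
    ((card_union_le _ _).trans (Nat.add_le_add_right (card_union_le _ _) _))
  omega

/-- Any family of columns on `m` consecutive rows with more than `p` entries each and without an
`(r, s)`-formation has at most `N` members. -/
def ColumnBound (r s p m N : ℕ) : Prop :=
  ∀ (ι : Type) (C : Finset ι) (S : ι → Finset ℕ) (a : ℕ),
    (∀ c ∈ C, S c ⊆ Ico a (a + m) ∧ p < #(S c)) → AvoidsFormation r s C S → #C ≤ N

namespace ColumnBound

variable {r s p p₁ p₂ p₃ m m' t g N N' N₀ N₁ N₂ N₃ : ℕ}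

theorem mono (h : ColumnBound r s p m N) (hN : N ≤ N') : ColumnBound r s p m N' :=
  fun ι C S a hC hA ↦ (h ι C S a hC hA).trans hN

theorem mono_rows (h : ColumnBound r s p m' N) (hm : m ≤ m') : ColumnBound r s p m N :=
  fun ι C S a hC hA ↦ h ι C S a
    (fun c hc ↦ ⟨(hC c hc).1.trans (Ico_subset_Ico_right (by omega)), (hC c hc).2⟩) hA

theorem of_rows_le (h : m ≤ p) : ColumnBound r s p m 0 := by
  intro ι C S a hC _
  refine (card_eq_zero.2 (eq_empty_of_forall_notMem fun c hc ↦ ?_)).le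
  have := card_le_card (hC c hc).1
  rw [Nat.card_Ico] at this
  have := (hC c hc).2
  omega

theorem of_le_one (hs : s ≤ 1) : ColumnBound r s p m r := by
  intro ι C S a hC hA
  by_contra! hlt
  obtain ⟨T, hT, hr⟩ := exists_subset_card_eq hlt.le
  refine hA T hT hr (fun _ ↦ 0) monotone_const fun c hc i hi ↦ ?_
  obtain ⟨x, hx⟩ := card_pos.1 (Nat.zero_lt_of_lt (hC c (hT hc)).2)
  exact ⟨x, hx, by omega⟩

section Block

variable {ι : Type} {C : Finset ι} {S : ι → Finset ℕ} {β : Type*} [LinearOrder β] {q : ℕ → β}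
  {G : β} {b : ℕ}

theorem card_filter_left_le (h : ColumnBound r s p t N) (hA : AvoidsFormation r (s + 1) C S)
    (hq : Monotone q) (hG : ∀ c ∈ C, ∀ x ∈ S c, q x = G → x ∈ Ico b (b + t)) :
    #{c ∈ C | p < #{x ∈ S c | q x = G} ∧ ∃ y ∈ S c, G < q y} ≤ N := by
  refine h ι _ (fun c ↦ {x ∈ S c | q x = G}) b (fun c hc ↦ ?_)
    ((hA.mono (filter_subset _ _) fun _ _ ↦ Subset.rfl).of_isLowerSet
      ((isLowerSet_Iic G).preimage hq) (fun c _ x hx ↦ ?_) fun c hc ↦ ?_)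
  · obtain ⟨hc, hlt, -⟩ := mem_filter.1 hc
    exact ⟨fun x hx ↦ hG c hc x (mem_filter.1 hx).1 (mem_filter.1 hx).2, hlt⟩
  · exact ⟨(mem_filter.1 hx).1, (mem_filter.1 hx).2.le⟩
  · exact (mem_filter.1 hc).2.2.imp fun y hy ↦ ⟨hy.1, hy.2.not_ge⟩

theorem card_filter_right_le (h : ColumnBound r s p t N) (hA : AvoidsFormation r (s + 1) C S)
    (hq : Monotone q) (hG : ∀ c ∈ C, ∀ x ∈ S c, q x = G → x ∈ Ico b (b + t)) :
    #{c ∈ C | p < #{x ∈ S c | q x = G} ∧ ∃ y ∈ S c, q y < G} ≤ N := by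
  refine h ι _ (fun c ↦ {x ∈ S c | q x = G}) b (fun c hc ↦ ?_)
    ((hA.mono (filter_subset _ _) fun _ _ ↦ Subset.rfl).of_isUpperSet
      ((isUpperSet_Ici G).preimage hq) (fun c _ x hx ↦ ?_) fun c hc ↦ ?_)
  · obtain ⟨hc, hlt, -⟩ := mem_filter.1 hc
    exact ⟨fun x hx ↦ hG c hc x (mem_filter.1 hx).1 (mem_filter.1 hx).2, hlt⟩
  · exact ⟨(mem_filter.1 hx).1, (mem_filter.1 hx).2.ge⟩
  · exact (mem_filter.1 hc).2.2.imp fun y hy ↦ ⟨hy.1, hy.2.not_ge⟩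

theorem card_filter_middle_le (h : ColumnBound r s p t N) (hA : AvoidsFormation r (s + 2) C S)
    (hq : Monotone q) (hG : ∀ c ∈ C, ∀ x ∈ S c, q x = G → x ∈ Ico b (b + t)) :
    #{c ∈ C | p < #{x ∈ S c | q x = G} ∧ (∃ y ∈ S c, q y < G) ∧ ∃ y ∈ S c, G < q y} ≤ N := by
  have hlower : AvoidsFormation r (s + 1) {c ∈ C | ∃ y ∈ S c, G < q y}
      fun c ↦ {x ∈ S c | q x ≤ G} :=
    (hA.mono (filter_subset _ _) fun _ _ ↦ Subset.rfl).of_isLowerSet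
      ((isLowerSet_Iic G).preimage hq) (fun c _ x hx ↦ ⟨(mem_filter.1 hx).1, (mem_filter.1 hx).2⟩)
      fun c hc ↦ (mem_filter.1 hc).2.imp fun y hy ↦ ⟨hy.1, hy.2.not_ge⟩
  refine (card_le_card fun c hc ↦ ?_).trans (h.card_filter_right_le hlower hq fun c hc x hx ↦
    hG c (mem_filter.1 hc).1 x (mem_filter.1 hx).1)
  obtain ⟨hc, hlt, ⟨y, hy, hyG⟩, hright⟩ := mem_filter.1 hc
  refine mem_filter.2 ⟨mem_filter.2 ⟨hc, hright⟩, ?_, y, mem_filter.2 ⟨hy, hyG.le⟩, hyG⟩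
  refine hlt.trans_le (card_le_card fun x hx ↦ ?_)
  obtain ⟨hx, hxG⟩ := mem_filter.1 hx
  exact mem_filter.2 ⟨mem_filter.2 ⟨hx, hxG.le⟩, hxG⟩

open Classical in
theorem card_filter_isHeavyAt_le (h₀ : ColumnBound r (s + 2) p t N₀)
    (h₁ : ColumnBound r (s + 1) p₁ t N₁) (h₂ : ColumnBound r s p₂ t N₂)
    (hA : AvoidsFormation r (s + 2) C S) (hp : ∀ c ∈ C, p < #(S c)) (hq : Monotone q)
    (hG : ∀ c ∈ C, ∀ x ∈ S c, q x = G → x ∈ Ico b (b + t)) :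
    #{c ∈ C | IsHeavyAt q p₁ p₂ (S c) G} ≤ N₀ + 2 * N₁ + N₂ := by
  have hlocal : #{c ∈ C | ∀ x ∈ S c, q x = G} ≤ N₀ := by
    refine h₀ ι _ S b (fun c hc ↦ ?_) (hA.mono (filter_subset _ _) fun _ _ ↦ Subset.rfl)
    obtain ⟨hc, hin⟩ := mem_filter.1 hc
    exact ⟨fun x hx ↦ hG c hc x hx (hin x hx), hp c hc⟩
  have hleft := h₁.card_filter_left_le hA hq hG
  have hright := h₁.card_filter_right_le hA hq hG
  have hmiddle := h₂.card_filter_middle_le hA hq hG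
  have hcover : {c ∈ C | IsHeavyAt q p₁ p₂ (S c) G} ⊆ {c ∈ C | ∀ x ∈ S c, q x = G} ∪
      ({c ∈ C | p₁ < #{x ∈ S c | q x = G} ∧ ∃ y ∈ S c, G < q y} ∪
        ({c ∈ C | p₁ < #{x ∈ S c | q x = G} ∧ ∃ y ∈ S c, q y < G} ∪
          {c ∈ C | p₂ < #{x ∈ S c | q x = G} ∧ (∃ y ∈ S c, q y < G) ∧ ∃ y ∈ S c, G < q y})) := by
    intro c hc
    obtain ⟨hc, hheavy⟩ := mem_filter.1 hc
    simp only [mem_union, mem_filter, hc, true_and]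
    exact hheavy
  calc _ ≤ _ := card_le_card hcover
    _ ≤ N₀ + (N₁ + (N₁ + N₂)) := (card_union_le _ _).trans <| Nat.add_le_add hlocal <|
      (card_union_le _ _).trans <| Nat.add_le_add hleft <|
      (card_union_le _ _).trans <| Nat.add_le_add hright hmiddle
    _ = N₀ + 2 * N₁ + N₂ := by ring

end Block

/-- The rows are cut into `g` blocks of `t` rows. A column that is not heavy in any block becomes,
after contracting every block to one row, a column with more than `p₃` entries. -/
theorem recurrence (ht : 0 < t) (h₀ : ColumnBound r (s + 2) p t N₀)
    (h₁ : ColumnBound r (s + 1) p₁ t N₁) (h₂ : ColumnBound r s p₂ t N₂)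
    (h₃ : ColumnBound r (s + 2) p₃ g N₃) (hp : 2 * p₁ + p₂ * p₃ ≤ p) :
    ColumnBound r (s + 2) p (t * g) (g * (N₀ + 2 * N₁ + N₂) + N₃) := by
  classical
  intro ι C S a hC hA
  let q : ℕ → ℕ := fun x ↦ (x - a) / t
  have hq : Monotone q := fun x y hxy ↦ Nat.div_le_div_right (Nat.sub_le_sub_right hxy a)
  have hqlt : ∀ c ∈ C, ∀ x ∈ S c, q x < g := fun c hc x hx ↦
    Nat.div_lt_of_lt_mul (by have := mem_Ico.1 ((hC c hc).1 hx); omega)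
  have hmem : ∀ G, ∀ c ∈ C, ∀ x ∈ S c, q x = G → x ∈ Ico (a + G * t) (a + G * t + t) := by
    intro G c hc x hx hxG
    have := mem_Ico.1 ((hC c hc).1 hx)
    have := (Nat.div_eq_iff ht).1 hxG
    exact mem_Ico.2 (by omega)
  have hheavy : ∀ G, #{c ∈ C | IsHeavyAt q p₁ p₂ (S c) G} ≤ N₀ + 2 * N₁ + N₂ := fun G ↦
    card_filter_isHeavyAt_le h₀ h₁ h₂ hA (fun c hc ↦ (hC c hc).2) hq (hmem G)
  have hspread : #{c ∈ C | p₃ < #((S c).image q)} ≤ N₃ := by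
    refine h₃ ι _ (fun c ↦ (S c).image q) 0 (fun c hc ↦ ?_)
      ((hA.mono (filter_subset _ _) fun _ _ ↦ Subset.rfl).image hq)
    obtain ⟨hc, hlt⟩ := mem_filter.1 hc
    refine ⟨image_subset_iff.2 fun x hx ↦ ?_, hlt⟩
    simpa only [zero_add, mem_Ico, Nat.zero_le, true_and] using hqlt c hc x hx
  have hcover : C ⊆ ((range g).biUnion fun G ↦ {c ∈ C | IsHeavyAt q p₁ p₂ (S c) G}) ∪
      {c ∈ C | p₃ < #((S c).image q)} := by
    intro c hc
    obtain ⟨x, hx, hxc⟩ | hlt :=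
      exists_isHeavyAt_or_lt_card_image (q := q) (hp.trans_lt (hC c hc).2)
    · exact mem_union_left _ (mem_biUnion.2
        ⟨q x, mem_range.2 (hqlt c hc x hx), mem_filter.2 ⟨hc, hxc⟩⟩)
    · exact mem_union_right _ (mem_filter.2 ⟨hc, hlt⟩)
  refine (card_le_card hcover).trans ((card_union_le _ _).trans (Nat.add_le_add ?_ hspread))
  simpa only [card_range] using card_biUnion_le_card_mul (range g) _ _ fun G _ ↦ hheavy G

theorem two_one : ColumnBound r 2 1 m (3 * r * m) := by
  have h := recurrence (g := m) one_pos (of_rows_le le_rfl) (of_le_one (r := r) (p := 0) le_rfl)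
    (of_le_one (p := 0) zero_le_one) (of_rows_le le_rfl) (by omega : 2 * 0 + 0 * m ≤ 1)
  rw [one_mul] at h
  exact h.mono (by linarith)

theorem three_two : ColumnBound r 3 2 m (3 * r * m) := by
  have h := recurrence (r := r) (g := m) one_pos (of_rows_le one_le_two) (of_rows_le le_rfl)
    (of_le_one (p := 0) le_rfl) (of_rows_le le_rfl) (by omega : 2 * 1 + 0 * m ≤ 2)
  rw [one_mul] at h
  exact h.mono (by nlinarith)

end ColumnBound

/-! ### The threshold recursion -/

/-- The number of `1`-entries per column beyond which columns without `(r, u + 2)`-formations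
become rare: the recursion matches `ColumnBound.recurrence`, the level `d` saying that the rows
are cut into blocks according to `alphaHier d`. -/
def threshold : ℕ → ℕ → ℕ
  | 0, _ => 1
  | 1, _ => 2
  | _ + 2, 0 => 2
  | u + 2, d + 1 => 2 * threshold (u + 1) (d + 1) + threshold u (d + 1) * threshold (u + 2) d
  termination_by u d => (u, d)

theorem threshold_zero (d : ℕ) : threshold 0 d = 1 := by rw [threshold]

theorem threshold_one (d : ℕ) : threshold 1 d = 2 := by rw [threshold]

theorem threshold_add_two_zero (u : ℕ) : threshold (u + 2) 0 = 2 := by rw [threshold]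

theorem threshold_add_two_succ (u d : ℕ) : threshold (u + 2) (d + 1) =
    2 * threshold (u + 1) (d + 1) + threshold u (d + 1) * threshold (u + 2) d := by
  rw [threshold]

theorem two_le_threshold_succ (u d : ℕ) : 2 ≤ threshold (u + 1) d := by
  induction u generalizing d with
  | zero => exact (threshold_one d).ge
  | succ u ih =>
    obtain _ | d := d
    · exact (threshold_add_two_zero u).ge
    · rw [threshold_add_two_succ]
      have := ih (d + 1)
      omega

theorem one_le_threshold (u d : ℕ) : 1 ≤ threshold u d := by
  obtain _ | u := u
  · exact (threshold_zero d).ge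
  · exact one_le_two.trans (two_le_threshold_succ u d)

theorem pow_add_two_add_le_succ_pow {s : ℕ} (hs : s ≠ 0) (i : ℕ) :
    i ^ (s + 2) + 2 * i ^ (s + 1) + i ^ s + 1 ≤ (i + 1) ^ (s + 2) := by
  have hlt : i ^ s < (i + 1) ^ s := Nat.pow_lt_pow_left (Nat.lt_succ_self i) hs
  calc i ^ (s + 2) + 2 * i ^ (s + 1) + i ^ s + 1
      ≤ i ^ (s + 2) + 2 * i ^ (s + 1) + i ^ s + (i + 1) ^ 2 :=
        Nat.add_le_add_left (Nat.one_le_pow _ _ i.succ_pos) _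
    _ = (i ^ s + 1) * (i + 1) ^ 2 := by ring
    _ ≤ (i + 1) ^ s * (i + 1) ^ 2 := Nat.mul_le_mul_right _ hlt
    _ = (i + 1) ^ (s + 2) := by ring

open Nat in
theorem succ_pow_le_factorial_mul_two_pow (s x : ℕ) : (x + 1) ^ s ≤ s ! * 2 ^ s * 2 ^ x :=
  calc (x + 1) ^ s ≤ (x + 1).ascFactorial s := pow_succ_le_ascFactorial (x + 1) s
    _ = s ! * (x + s).choose s := ascFactorial_eq_factorial_mul_choose x s
    _ ≤ s ! * 2 ^ (x + s) := Nat.mul_le_mul_left _ (choose_le_two_pow _ _)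
    _ = s ! * 2 ^ s * 2 ^ x := by ring

namespace ColumnBound

variable {r s p p₁ p₂ p₃ X : ℕ}

/-- The rows of a `2 ^ L`-rowed family are cut into blocks of `2 ^ f L` rows; `a` counts the steps
of the descent along `f`. -/
theorem of_descent {f a : ℕ → ℕ} (hs : s ≠ 0) (hp : 2 * p₁ + p₂ * p₃ ≤ p) (hp_two : 2 ≤ p)
    (hf : ∀ L, 2 ≤ L → f L < L) (ha : ∀ L, 2 ≤ L → a L = a (f L) + 1)
    (h₁ : ∀ L, ColumnBound r (s + 1) p₁ (2 ^ L) (X * (a L + 1) ^ (s + 1) * 2 ^ L))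
    (h₂ : ∀ L, ColumnBound r s p₂ (2 ^ L) (X * (a L + 1) ^ s * 2 ^ L))
    (h₃ : ∀ L, 2 ≤ L → ColumnBound r (s + 2) p₃ (2 ^ (L - f L)) (X * 2 ^ L)) (L : ℕ) :
    ColumnBound r (s + 2) p (2 ^ L) (X * (a L + 1) ^ (s + 2) * 2 ^ L) := by
  induction L using Nat.strong_induction_on with
  | _ L ih =>
    by_cases hL : L ≤ 1
    · exact (of_rows_le ((Nat.pow_le_pow_right two_pos hL).trans hp_two)).mono (Nat.zero_le _)
    have hlt := hf L (by omega)
    have hpow : 2 ^ f L * 2 ^ (L - f L) = 2 ^ L := by rw [← pow_add, Nat.add_sub_of_le hlt.le]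
    have h := recurrence (by positivity) (ih (f L) hlt) (h₁ (f L)) (h₂ (f L)) (h₃ L (by omega)) hp
    rw [hpow] at h
    refine h.mono ?_
    rw [ha L (by omega)]
    set i := a (f L) + 1
    calc _ = X * (i ^ (s + 2) + 2 * i ^ (s + 1) + i ^ s) * (2 ^ f L * 2 ^ (L - f L))
          + X * 2 ^ L := by ring
      _ = X * (i ^ (s + 2) + 2 * i ^ (s + 1) + i ^ s + 1) * 2 ^ L := by rw [hpow]; ring
      _ ≤ X * (i + 1) ^ (s + 2) * 2 ^ L := by
        gcongr
        exact pow_add_two_add_le_succ_pow hs i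

theorem threshold_one_level (r u L : ℕ) :
    ColumnBound r (u + 2) (threshold u 1) (2 ^ L) (3 * r * (L + 1) ^ (u + 2) * 2 ^ L) := by
  induction u using Nat.twoStepInduction generalizing L with
  | zero =>
    rw [threshold_zero]
    exact two_one.mono (Nat.mul_le_mul_right _ (Nat.le_mul_of_pos_right _ (by positivity)))
  | one =>
    rw [threshold_one]
    exact three_two.mono (Nat.mul_le_mul_right _ (Nat.le_mul_of_pos_right _ (by positivity)))
  | more u ih₀ ih₁ =>
    refine of_descent (f := fun L ↦ L - 1) (a := id) (by omega) (threshold_add_two_succ u 0).ge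
      (two_le_threshold_succ _ _) (fun L hL ↦ by omega) (fun L hL ↦ ?_) ih₁ ih₀ (fun L hL ↦ ?_) L
    · simp only [id]; omega
    · refine (of_rows_le ?_).mono (Nat.zero_le _)
      rw [threshold_add_two_zero, show L - (L - 1) = 1 by omega, pow_one]

theorem threshold_succ_level {r u c d : ℕ}
    (h₀ : ∀ L, ColumnBound r (u + 2) (threshold u (d + 2)) (2 ^ L)
      (c ^ (d + 2) * (alphaHier (d + 2) L + 1) ^ (u + 2) * 2 ^ L))
    (h₁ : ∀ L, ColumnBound r (u + 3) (threshold (u + 1) (d + 2)) (2 ^ L)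
      (c ^ (d + 2) * (alphaHier (d + 2) L + 1) ^ (u + 3) * 2 ^ L))
    (h₂ : ∀ L, ColumnBound r (u + 4) (threshold (u + 2) (d + 1)) (2 ^ L)
      (c ^ (d + 1) * (alphaHier (d + 1) L + 1) ^ (u + 4) * 2 ^ L))
    (hc : (u + 4).factorial * 2 ^ (u + 4) ≤ c) (L : ℕ) :
    ColumnBound r (u + 4) (threshold (u + 2) (d + 2)) (2 ^ L)
      (c ^ (d + 2) * (alphaHier (d + 2) L + 1) ^ (u + 4) * 2 ^ L) := by
  refine of_descent (by omega) (threshold_add_two_succ u (d + 1)).ge (two_le_threshold_succ _ _)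
    (fun L hL ↦ alphaHier_succ_lt_self d hL)
    (fun L hL ↦ (alphaHier_add_two d hL).trans (add_comm _ _)) h₁ h₀ (fun L hL ↦ ?_) L
  have hlt := alphaHier_succ_lt_self d hL
  have hmono := monotone_alphaHier_succ d (Nat.sub_le L (alphaHier (d + 1) L))
  refine (h₂ (L - alphaHier (d + 1) L)).mono ?_
  calc c ^ (d + 1) * (alphaHier (d + 1) (L - alphaHier (d + 1) L) + 1) ^ (u + 4)
        * 2 ^ (L - alphaHier (d + 1) L)
      ≤ c ^ (d + 1) * (c * 2 ^ alphaHier (d + 1) L) * 2 ^ (L - alphaHier (d + 1) L) := by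
        gcongr
        exact (Nat.pow_le_pow_left (by omega) _).trans
          ((succ_pow_le_factorial_mul_two_pow _ _).trans (Nat.mul_le_mul_right _ hc))
    _ = c ^ (d + 2) * (2 ^ alphaHier (d + 1) L * 2 ^ (L - alphaHier (d + 1) L)) := by ring
    _ = c ^ (d + 2) * 2 ^ L := by rw [← pow_add, Nat.add_sub_of_le hlt.le]

theorem exists_threshold (r u : ℕ) : ∃ c, ∀ d L,
    ColumnBound r (u + 2) (threshold u (d + 1)) (2 ^ L)
      (c ^ (d + 1) * (alphaHier (d + 1) L + 1) ^ (u + 2) * 2 ^ L) := by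
  induction u using Nat.twoStepInduction with
  | zero =>
    refine ⟨3 * r, fun d L ↦ ?_⟩
    rw [threshold_zero]
    refine two_one.mono (Nat.mul_le_mul_right _ ?_)
    exact (Nat.le_self_pow (by omega) _).trans (Nat.le_mul_of_pos_right _ (by positivity))
  | one =>
    refine ⟨3 * r, fun d L ↦ ?_⟩
    rw [threshold_one]
    refine three_two.mono (Nat.mul_le_mul_right _ ?_)
    exact (Nat.le_self_pow (by omega) _).trans (Nat.le_mul_of_pos_right _ (by positivity))
  | more u ih₀ ih₁ =>
    obtain ⟨c₀, ih₀⟩ := ih₀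
    obtain ⟨c₁, ih₁⟩ := ih₁
    let c := c₀ + c₁ + (u + 4).factorial * 2 ^ (u + 4) + 3 * r * 2 ^ (u + 4)
    refine ⟨c, fun d ↦ ?_⟩
    induction d with
    | zero =>
      intro L
      refine (threshold_one_level r (u + 2) L).mono (Nat.mul_le_mul_right _ ?_)
      calc 3 * r * (L + 1) ^ (u + 4) ≤ 3 * r * (2 * (alphaHier 1 L + 1)) ^ (u + 4) := by
            gcongr; simp only [alphaHier]; omega
        _ = 3 * r * 2 ^ (u + 4) * (alphaHier 1 L + 1) ^ (u + 4) := by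
          rw [mul_pow, mul_assoc (3 * r)]
        _ ≤ c ^ (0 + 1) * (alphaHier 1 L + 1) ^ (u + 4) :=
          Nat.mul_le_mul_right _ (by rw [zero_add, pow_one]; exact Nat.le_add_left _ _)
    | succ d ih =>
      refine threshold_succ_level (fun L ↦ (ih₀ (d + 1) L).mono ?_)
        (fun L ↦ (ih₁ (d + 1) L).mono ?_) ih (by omega)
      · gcongr; omega
      · gcongr; omega

end ColumnBound

/-! ### Counting the `1`-entries -/

theorem exists_chunks {α : Type*} [LinearOrder α] (S : Finset α) (m : ℕ) :
    ∃ B : ℕ → Finset α, (∀ j, B j ⊆ S) ∧ (∀ j < #S / m, m ≤ #(B j)) ∧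
      ∀ i j, i < j → ∀ x ∈ B i, ∀ y ∈ B j, x < y := by
  let e := S.orderEmbOfFin rfl
  let F (j : ℕ) : Finset (Fin #S) := {i | (i : ℕ) / m = j}
  refine ⟨fun j ↦ (F j).map e.toEmbedding, fun j ↦ ?_, fun j hj ↦ ?_, fun i j hij x hx y hy ↦ ?_⟩
  · exact (map_subset_map.2 (subset_univ _)).trans (map_orderEmbOfFin_univ S rfl).subset
  · rw [card_map]
    have hsubset : Ico (j * m) (j * m + m) ⊆ (F j).image Fin.val := by
      intro x hx
      have hm : 0 < m := Nat.pos_of_ne_zero (by rintro rfl; simp at hj)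
      have hlast : (j + 1) * m ≤ #S := (Nat.le_div_iff_mul_le hm).1 hj
      rw [mem_Ico] at hx
      refine mem_image.2 ⟨⟨x, by linarith⟩, mem_filter.2 ⟨mem_univ _, ?_⟩, rfl⟩
      exact (Nat.div_eq_iff hm).2 (by dsimp only; omega)
    simpa only [Nat.card_Ico, Nat.add_sub_cancel_left] using
      (card_le_card hsubset).trans card_image_le
  · obtain ⟨i, hi, rfl⟩ := mem_map.1 hx
    obtain ⟨j, hj, rfl⟩ := mem_map.1 hy
    rw [← (mem_filter.1 hi).2, ← (mem_filter.1 hj).2] at hij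
    exact e.strictMono (Fin.lt_def.2 (lt_of_not_ge fun h ↦ hij.not_ge (Nat.div_le_div_right h)))

/-- Each column splits into chunks of `p + 1` entries, which serve as columns of their own. -/
theorem ColumnBound.sum_card_le {r s p m N : ℕ} (h : ColumnBound r s p m N) (hs : 2 ≤ s) {ι : Type}
    {C : Finset ι} {S : ι → Finset ℕ} {a : ℕ} (hC : ∀ c ∈ C, S c ⊆ Ico a (a + m))
    (hA : AvoidsFormation r s C S) : ∑ c ∈ C, #(S c) ≤ p * #C + (p + 1) * N := by
  choose B hB hcard hlt using fun c ↦ exists_chunks (S c) (p + 1)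
  have hchunks : ∑ c ∈ C, #(S c) / (p + 1) ≤ N := by
    refine le_of_eq_of_le (by simp only [card_sigma, card_range]) (h _ _ _ a (fun z hz ↦ ?_)
      (hA.sigma hs (n := fun c ↦ #(S c) / (p + 1)) (fun c _ j _ ↦ hB c j) hlt))
    obtain ⟨hzC, hzn⟩ := mem_sigma.1 hz
    exact ⟨(hB _ _).trans (hC _ hzC), hcard _ _ (mem_range.1 hzn)⟩
  calc ∑ c ∈ C, #(S c) ≤ ∑ c ∈ C, (p + (p + 1) * (#(S c) / (p + 1))) := by
        refine sum_le_sum fun c _ ↦ ?_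
        have := Nat.div_add_mod #(S c) (p + 1)
        have := Nat.mod_lt #(S c) (by omega : p + 1 > 0)
        omega
    _ = p * #C + (p + 1) * ∑ c ∈ C, #(S c) / (p + 1) := by
        rw [sum_add_distrib, sum_const, smul_eq_mul, mul_comm, mul_sum]
    _ ≤ p * #C + (p + 1) * N := Nat.add_le_add_left (Nat.mul_le_mul_left _ hchunks) _

theorem avoidsFormation_of_not_isFull {k n : ℕ} {M : Fin n → Fin n → Bool} (hM : ¬ IsFull k M) :
    AvoidsFormation k k univ fun c ↦ ({x | M x c = true} : Finset (Fin n)) := by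
  intro T _ hk g hg hform
  refine hM ⟨T.orderEmbOfFin hk, (T.orderEmbOfFin hk).strictMono, fun σ ↦ ?_⟩
  choose f hf hgf using fun a : Fin k ↦
    hform _ (T.orderEmbOfFin_mem hk (σ.symm a)) a a.isLt
  refine ⟨f, fun a b hab ↦ lt_of_not_ge fun hba ↦ ?_, fun b ↦ ?_⟩
  · have := hg hba
    rw [hgf, hgf] at this
    omega
  · simpa only [mem_filter, mem_univ, true_and, Equiv.symm_apply_apply] using hf (σ b)

theorem matOnes_eq_sum_card {m n : ℕ} (M : Fin m → Fin n → Bool) :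
    matOnes M = ∑ c, #{x | M x c = true} := by
  simp only [matOnes, Nat.card_eq_fintype_card, Fintype.card_subtype, card_filter,
    Fintype.sum_prod_type]
  exact sum_comm

theorem ColumnBound.pFull_le {k n p N : ℕ} (h : ColumnBound (k + 1) (k + 1) p n N) (hk : 1 ≤ k) :
    pFull k n ≤ p * n + (p + 1) * N := by
  refine csSup_le' ?_
  rintro _ ⟨M, hM, rfl⟩
  have hsum := h.sum_card_le (a := 0) (by omega) (fun c _ ↦ ?_)
    ((avoidsFormation_of_not_isFull hM).image Fin.val_strictMono.monotone)
  · simpa only [matOnes_eq_sum_card, card_image_of_injective _ Fin.val_injective, card_univ,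
      Fintype.card_fin] using hsum
  · exact image_subset_iff.2 fun x _ ↦ mem_Ico.2 ⟨Nat.zero_le _, by omega⟩

theorem exists_le_two_pow (n : ℕ) (hn : n ≠ 0) : ∃ L ≤ n, n ≤ 2 ^ L ∧ 2 ^ L ≤ 2 * n := by
  refine ⟨Nat.log 2 n + 1, Nat.log_lt_self 2 hn, (Nat.lt_pow_succ_log_self one_lt_two n).le, ?_⟩
  rw [pow_succ, mul_comm]
  exact Nat.mul_le_mul_left 2 (Nat.pow_log_le_self 2 hn)

theorem exists_pFull_le_threshold (u : ℕ) : ∃ c : ℕ, c ≠ 0 ∧ ∀ n : ℕ, n ≠ 0 →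
    pFull (u + 1) n ≤ n * threshold u (invAck n) * c ^ invAck n := by
  obtain ⟨c, hc⟩ := ColumnBound.exists_threshold (u + 2) u
  refine ⟨4 ^ (u + 3) * (c + 1), by positivity, fun n hn ↦ ?_⟩
  obtain ⟨hd, hsmall⟩ := one_le_invAck_and_alphaHier_invAck_le n
  obtain ⟨d, hd⟩ := Nat.exists_eq_add_of_le' hd
  rw [hd] at hsmall ⊢
  obtain ⟨L, hLn, hn_le, hle_n⟩ := exists_le_two_pow n hn
  have hL := (monotone_alphaHier_succ d hLn).trans hsmall
  have hp := one_le_threshold u (d + 1)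
  set p := threshold u (d + 1)
  have hc_succ : c ^ (d + 1) + 1 ≤ (c + 1) ^ (d + 1) :=
    Nat.pow_lt_pow_left c.lt_succ_self d.succ_ne_zero
  have hN : c ^ (d + 1) * (alphaHier (d + 1) L + 1) ^ (u + 2) * 2 ^ L ≤
      c ^ (d + 1) * 4 ^ (u + 2) * (2 * n) := by gcongr; omega
  calc pFull (u + 1) n
      ≤ p * n + (p + 1) * (c ^ (d + 1) * (alphaHier (d + 1) L + 1) ^ (u + 2) * 2 ^ L) :=
        ((hc d L).mono_rows hn_le).pFull_le (by omega)
    _ ≤ 4 ^ (u + 3) * (p * n) + (p + p) * (c ^ (d + 1) * 4 ^ (u + 2) * (2 * n)) := by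
        refine Nat.add_le_add (Nat.le_mul_of_pos_left _ (by positivity)) ?_
        gcongr
    _ = n * p * (4 ^ (u + 3) * (c ^ (d + 1) + 1)) := by ring
    _ ≤ n * p * ((4 ^ (u + 3)) ^ (d + 1) * (c + 1) ^ (d + 1)) :=
        Nat.mul_le_mul_left _ (Nat.mul_le_mul (Nat.le_self_pow d.succ_ne_zero _) hc_succ)
    _ = n * p * (4 ^ (u + 3) * (c + 1)) ^ (d + 1) := by rw [mul_pow]

/-! ### Growth of the thresholds -/

theorem logb_threshold_add_two_succ_le {u d : ℕ} {B : ℝ}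
    (h₁ : 2 + Real.logb 2 (threshold (u + 1) (d + 1)) ≤ B)
    (h₂ : 1 + Real.logb 2 (threshold u (d + 1)) + Real.logb 2 (threshold (u + 2) d) ≤ B) :
    Real.logb 2 (threshold (u + 2) (d + 1)) ≤ B := by
  have hpos : ∀ u d, (0 : ℝ) < threshold u d := fun u d ↦ Nat.cast_pos.2 (one_le_threshold u d)
  have hle : (threshold (u + 1) (d + 1) : ℝ) ≤ 2 ^ (B - 2) :=
    (Real.logb_le_iff_le_rpow one_lt_two (hpos _ _)).1 (by linarith)
  have hmul_le : (threshold u (d + 1) * threshold (u + 2) d : ℝ) ≤ 2 ^ (B - 1) := by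
    rw [← Real.logb_le_iff_le_rpow one_lt_two (mul_pos (hpos _ _) (hpos _ _)),
      Real.logb_mul (hpos _ _).ne' (hpos _ _).ne']
    linarith
  rw [Real.logb_le_iff_le_rpow one_lt_two (hpos _ _), threshold_add_two_succ]
  push_cast
  calc 2 * (threshold (u + 1) (d + 1) : ℝ) + threshold u (d + 1) * threshold (u + 2) d
      ≤ 2 * 2 ^ (B - 2) + 2 ^ (B - 1) := by gcongr
    _ = 2 ^ B := by
      rw [Real.rpow_sub two_pos, Real.rpow_sub two_pos, Real.rpow_two, Real.rpow_one]
      ring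

theorem logb_threshold_add_two_le {u : ℕ} {a b f : ℝ → ℝ}
    (ha : ∀ d : ℕ, 1 ≤ d → Real.logb 2 (threshold (u + 1) d) ≤ a d)
    (hb : ∀ d : ℕ, 1 ≤ d → Real.logb 2 (threshold u d) ≤ b d)
    (hfa : ∀ x, 1 ≤ x → 2 + a x ≤ f x) (hf_one : 2 + b 1 ≤ f 1)
    (hfb : ∀ x, 2 ≤ x → 1 + b x + f (x - 1) ≤ f x) {d : ℕ} (hd : 1 ≤ d) :
    Real.logb 2 (threshold (u + 2) d) ≤ f d := by
  induction d, hd using Nat.le_induction with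
  | base =>
    refine logb_threshold_add_two_succ_le ?_ ?_
    · exact (add_le_add_right (ha 1 le_rfl) 2).trans (hfa _ (by norm_num))
    · have := hb 1 le_rfl
      rw [threshold_add_two_zero, Nat.cast_two, Real.logb_self_eq_one one_lt_two]
      push_cast at this ⊢
      linarith
  | succ d hd ih =>
    have hd' : (1 : ℝ) ≤ d := Nat.one_le_cast.2 hd
    refine logb_threshold_add_two_succ_le ?_ ?_
    · exact (add_le_add_right (ha (d + 1) (by omega)) 2).trans (hfa _ (by push_cast; linarith))
    · have hstep := hfb (d + 1 : ℕ) (by push_cast; linarith)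
      have := hb (d + 1) (by omega)
      push_cast [add_sub_cancel_right] at this hstep ⊢
      linarith

theorem sub_one_pow_succ_le (t : ℕ) {x : ℝ} (hx : 1 ≤ x) :
    (x - 1) ^ (t + 1) ≤ x ^ (t + 1) - x ^ t :=
  calc (x - 1) ^ (t + 1) = (x - 1) ^ t * (x - 1) := pow_succ _ _
    _ ≤ x ^ t * (x - 1) := by gcongr; linarith
    _ = x ^ (t + 1) - x ^ t := by ring

theorem sub_one_pow_succ_mul_le (t : ℕ) {x l : ℝ} (hx : 1 ≤ x) (hl : l ≤ x) :
    (x - 1) ^ (t + 1) * l ≤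
      (x ^ (t + 1) - (t + 1) * x ^ t) * l + (t + 1).choose 2 * x ^ t := by
  induction t with
  | zero => simp
  | succ t ih =>
    have hchoose : ((t + 2).choose 2 : ℝ) = (t + 1) + (t + 1).choose 2 := by
      rw [Nat.choose_succ_succ' (t + 1) 1, Nat.choose_one_right]
      push_cast
      rfl
    calc (x - 1) ^ (t + 2) * l = (x - 1) ^ (t + 1) * l * (x - 1) := by ring
      _ ≤ ((x ^ (t + 1) - (t + 1) * x ^ t) * l + (t + 1).choose 2 * x ^ t) * (x - 1) := by
        gcongr
      _ = (x ^ (t + 2) - (t + 2) * x ^ (t + 1)) * l + (t + 1) * x ^ t * l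
          + (t + 1).choose 2 * (x ^ (t + 1) - x ^ t) := by ring
      _ ≤ (x ^ (t + 2) - (t + 2) * x ^ (t + 1)) * l + (t + 1) * x ^ t * x
          + (t + 1).choose 2 * x ^ (t + 1) := by
        gcongr
        exact sub_le_self _ (by positivity)
      _ = (x ^ (t + 2) - ((t + 1 : ℕ) + 1) * x ^ (t + 1)) * l
          + (t + 2).choose 2 * x ^ (t + 1) := by
        rw [hchoose]
        push_cast
        ring

/-- `threshold (2 * t + 1) d` is at most `2 ^ O(d ^ t)`. -/
def OddGrowth (t : ℕ) : Prop :=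
  ∃ C : ℝ, 0 ≤ C ∧ ∀ d : ℕ, 1 ≤ d → Real.logb 2 (threshold (2 * t + 1) d) ≤ C * (d : ℝ) ^ t

/-- `threshold (2 * t + 2) d` is at most `2 ^ (d ^ t * logb 2 d / t ! + O(d ^ t))`. -/
def EvenGrowth (t : ℕ) : Prop :=
  ∃ C : ℝ, 0 ≤ C ∧ ∀ d : ℕ, 1 ≤ d → Real.logb 2 (threshold (2 * t + 2) d) ≤
    1 / (t.factorial : ℝ) * (d : ℝ) ^ t * Real.logb 2 d + C * (d : ℝ) ^ t

theorem oddGrowth_zero : OddGrowth 0 := by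
  refine ⟨1, zero_le_one, fun d _ ↦ ?_⟩
  rw [threshold_one, Nat.cast_two, Real.logb_self_eq_one one_lt_two, pow_zero, mul_one]

theorem threshold_two (d : ℕ) : threshold 2 d = 4 * d + 2 := by
  induction d with
  | zero => exact threshold_add_two_zero 0
  | succ d ih =>
    rw [threshold_add_two_succ, ih, threshold_one, threshold_zero]
    ring

theorem evenGrowth_zero : EvenGrowth 0 := by
  refine ⟨3, by norm_num, fun d hd ↦ ?_⟩
  have hd' : (1 : ℝ) ≤ d := Nat.one_le_cast.2 hd
  have hthree : Real.logb 2 8 = 3 := by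
    rw [show (8 : ℝ) = 2 ^ (3 : ℝ) by norm_num, Real.logb_rpow two_pos (by norm_num)]
  calc Real.logb 2 (threshold 2 d) ≤ Real.logb 2 (d * 8) := by
        rw [threshold_two]
        push_cast
        exact Real.logb_le_logb_of_le one_lt_two (by linarith) (by linarith)
    _ = Real.logb 2 d + 3 := by rw [Real.logb_mul (by positivity) (by norm_num), hthree]
    _ = _ := by norm_num

theorem logb_two_le_self {x : ℝ} (hx : 1 ≤ x) : Real.logb 2 x ≤ x := by
  rw [Real.logb_le_iff_le_rpow one_lt_two (by linarith)]
  have hbernoulli : 1 + x * 1 ≤ (1 + 1) ^ x :=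
    one_add_mul_self_le_rpow_one_add (by norm_num) hx
  rw [one_add_one_eq_two] at hbernoulli
  linarith

theorem one_div_factorial_le_one (t : ℕ) : 1 / (t.factorial : ℝ) ≤ 1 :=
  div_le_one_of_le₀ (Nat.one_le_cast.2 t.factorial_pos) (by positivity)

theorem EvenGrowth.oddGrowth_succ {t : ℕ} (hE : EvenGrowth t) (hO : OddGrowth t) :
    OddGrowth (t + 1) := by
  obtain ⟨CE, hCE, hE⟩ := hE
  obtain ⟨CO, hCO, hO⟩ := hO
  set C := CE + CO + 3 with hC
  refine ⟨C, by positivity, fun d hd ↦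
    logb_threshold_add_two_le (f := fun x ↦ C * x ^ (t + 1))
      (a := fun x ↦ 1 / (t.factorial : ℝ) * x ^ t * Real.logb 2 x + CE * x ^ t)
      (b := fun x ↦ CO * x ^ t) hE hO (fun x hx ↦ ?_) ?_ (fun x hx ↦ ?_) hd⟩
  · have hpow_succ : 1 ≤ x ^ (t + 1) := one_le_pow₀ hx
    calc 2 + (1 / (t.factorial : ℝ) * x ^ t * Real.logb 2 x + CE * x ^ t)
        ≤ 2 * x ^ (t + 1) + (1 * x ^ t * x + CE * x ^ (t + 1)) := by
          gcongr
          · linarith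
          · exact Real.logb_nonneg one_lt_two hx
          · exact one_div_factorial_le_one t
          · exact logb_two_le_self hx
          · exact t.le_succ
      _ = (CE + 3) * x ^ (t + 1) := by ring
      _ ≤ C * x ^ (t + 1) := by gcongr; linarith
  · simp only [one_pow]
    linarith
  · have hpow : 1 ≤ x ^ t := one_le_pow₀ (by linarith)
    calc 1 + CO * x ^ t + C * (x - 1) ^ (t + 1)
        ≤ x ^ t + CO * x ^ t + C * (x ^ (t + 1) - x ^ t) := by
          gcongr
          exact sub_one_pow_succ_le t (by linarith)
      _ = C * x ^ (t + 1) - (CE + 2) * x ^ t := by rw [hC]; ring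
      _ ≤ C * x ^ (t + 1) := sub_le_self _ (by positivity)

/- Since `1 / (t + 1)! * (t + 1) = 1 / t !`, the main terms cancel exactly. -/
theorem one_div_factorial_mul_sub_one_pow_succ_mul_logb_le (t : ℕ) {x : ℝ} (hx : 2 ≤ x) :
    1 / ((t + 1).factorial : ℝ) * (x - 1) ^ (t + 1) * Real.logb 2 (x - 1) ≤
      1 / ((t + 1).factorial : ℝ) * x ^ (t + 1) * Real.logb 2 x
        - 1 / (t.factorial : ℝ) * x ^ t * Real.logb 2 x + (t + 1).choose 2 * x ^ t := by
  have hx' : 1 ≤ x := by linarith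
  set F : ℝ := 1 / (t + 1).factorial with hF
  have hF_mul : 1 / (t.factorial : ℝ) = F * (t + 1) := by
    rw [hF, Nat.factorial_succ]
    push_cast
    field_simp
  have hlog_sub : Real.logb 2 (x - 1) ≤ Real.logb 2 x :=
    Real.logb_le_logb_of_le one_lt_two (by linarith) (by linarith)
  set l := Real.logb 2 x
  calc F * (x - 1) ^ (t + 1) * Real.logb 2 (x - 1)
      ≤ F * (x - 1) ^ (t + 1) * l := by gcongr
    _ = F * ((x - 1) ^ (t + 1) * l) := mul_assoc _ _ _
    _ ≤ F * ((x ^ (t + 1) - (t + 1) * x ^ t) * l + (t + 1).choose 2 * x ^ t) := by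
        gcongr
        exact sub_one_pow_succ_mul_le t hx' (logb_two_le_self hx')
    _ = F * x ^ (t + 1) * l - F * (t + 1) * x ^ t * l + F * ((t + 1).choose 2 * x ^ t) := by
        ring
    _ ≤ F * x ^ (t + 1) * l - F * (t + 1) * x ^ t * l + 1 * ((t + 1).choose 2 * x ^ t) := by
        gcongr
        exact one_div_factorial_le_one (t + 1)
    _ = _ := by rw [hF_mul, one_mul]

theorem EvenGrowth.succ {t : ℕ} (hE : EvenGrowth t) (hO : OddGrowth (t + 1)) :
    EvenGrowth (t + 1) := by
  obtain ⟨CE, hCE, hE⟩ := hE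
  obtain ⟨CO, hCO, hO⟩ := hO
  set F : ℝ := 1 / (t + 1).factorial
  set K : ℝ := ((t + 1).choose 2 : ℝ)
  set C := CE + CO + K + 2
  have hK : 0 ≤ K := by positivity
  have hC : 0 ≤ C := by positivity
  refine ⟨C, by positivity, fun d hd ↦
    logb_threshold_add_two_le
      (f := fun x ↦ F * x ^ (t + 1) * Real.logb 2 x + C * x ^ (t + 1))
      (a := fun x ↦ CO * x ^ (t + 1))
      (b := fun x ↦ 1 / (t.factorial : ℝ) * x ^ t * Real.logb 2 x + CE * x ^ t)
      hO hE (fun x hx ↦ ?_) ?_ (fun x hx ↦ ?_) hd⟩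
  · have hpow : 1 ≤ x ^ (t + 1) := one_le_pow₀ hx
    have hlog : 0 ≤ F * x ^ (t + 1) * Real.logb 2 x :=
      mul_nonneg (by positivity) (Real.logb_nonneg one_lt_two hx)
    calc 2 + CO * x ^ (t + 1) ≤ 2 * x ^ (t + 1) + CO * x ^ (t + 1) := by linarith
      _ = (CO + 2) * x ^ (t + 1) := by ring
      _ ≤ C * x ^ (t + 1) := by gcongr; linarith
      _ ≤ _ := le_add_of_nonneg_left hlog
  · simp only [one_pow, Real.logb_one, mul_zero, zero_add]
    linarith
  · have hpow : 1 ≤ x ^ t := one_le_pow₀ (by linarith)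
    have hlog := one_div_factorial_mul_sub_one_pow_succ_mul_logb_le t hx
    have hsub := mul_le_mul_of_nonneg_left (sub_one_pow_succ_le t (by linarith : 1 ≤ x)) hC
    have hmul : (CO + 1) * 1 ≤ (CO + 1) * x ^ t := by gcongr
    linarith

theorem evenGrowth_and_oddGrowth (t : ℕ) : EvenGrowth t ∧ OddGrowth t := by
  induction t with
  | zero => exact ⟨evenGrowth_zero, oddGrowth_zero⟩
  | succ t ih => exact ⟨ih.1.succ (ih.1.oddGrowth_succ ih.2), ih.1.oddGrowth_succ ih.2⟩

theorem exists_logb_threshold_succ_le (u : ℕ) : ∃ C : ℝ, ∀ d : ℕ, 1 ≤ d →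
    Real.logb 2 (threshold (u + 1) d) ≤
      1 / ((u / 2).factorial : ℝ) * (d : ℝ) ^ (u / 2) * Real.logb 2 d + C * (d : ℝ) ^ (u / 2) := by
  obtain ⟨t, rfl | rfl⟩ := u.even_or_odd'
  · obtain ⟨C, -, hC⟩ := (evenGrowth_and_oddGrowth t).2
    rw [show 2 * t / 2 = t by omega]
    refine ⟨C, fun d hd ↦ (hC d hd).trans (le_add_of_nonneg_left ?_)⟩
    exact mul_nonneg (by positivity) (Real.logb_nonneg one_lt_two (Nat.one_le_cast.2 hd))
  · obtain ⟨C, -, hC⟩ := (evenGrowth_and_oddGrowth t).1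
    rw [show (2 * t + 1) / 2 = t by omega]
    exact ⟨C, hC⟩

theorem cast_pow_le_two_rpow {c d t : ℕ} (hc : c ≠ 0) (ht : t ≠ 0) :
    (c : ℝ) ^ d ≤ 2 ^ (Real.logb 2 c * (d : ℝ) ^ t) := by
  have hc' : (1 : ℝ) ≤ c := Nat.one_le_cast.2 (Nat.one_le_iff_ne_zero.2 hc)
  calc (c : ℝ) ^ d = (2 ^ Real.logb 2 c) ^ d := by
        rw [Real.rpow_logb two_pos (by norm_num) (by linarith)]
    _ = 2 ^ (Real.logb 2 c * d) := by rw [Real.rpow_mul two_pos.le, Real.rpow_natCast]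
    _ ≤ 2 ^ (Real.logb 2 c * (d : ℝ) ^ t) := by
        gcongr
        · exact one_le_two
        · exact Real.logb_nonneg one_lt_two hc'
        · exact_mod_cast Nat.le_self_pow ht d

theorem pk_odd_upper_bound_general :
    ∀ k : ℕ, 4 ≤ k → ∃ C : ℝ, ∀ n : ℕ, 1 ≤ n →
      (pFull k n : ℝ) ≤ (n : ℝ) * (2 : ℝ) ^
        ((1 / (Nat.factorial ((k - 2) / 2) : ℝ)) * (invAck n : ℝ) ^ ((k - 2) / 2)
            * Real.logb 2 (invAck n)
          + C * (invAck n : ℝ) ^ ((k - 2) / 2)) := by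
  intro k hk
  obtain ⟨u, rfl⟩ := Nat.exists_eq_add_of_le' (show 2 ≤ k by omega)
  rw [Nat.add_sub_cancel]
  obtain ⟨c, hc, hpFull⟩ := exists_pFull_le_threshold (u + 1)
  obtain ⟨C, hC⟩ := exists_logb_threshold_succ_le u
  refine ⟨C + Real.logb 2 c, fun n hn ↦ ?_⟩
  set d := invAck n
  have hthreshold := (Real.logb_le_iff_le_rpow one_lt_two
    (Nat.cast_pos.2 (one_le_threshold _ _))).1
    (hC d (one_le_invAck_and_alphaHier_invAck_le n).1)
  calc (pFull (u + 2) n : ℝ)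
      ≤ n * (threshold (u + 1) d * c ^ d) := by
        rw [← mul_assoc]
        exact_mod_cast hpFull n (by omega)
    _ ≤ n * (2 ^ (1 / ((u / 2).factorial : ℝ) * d ^ (u / 2) * Real.logb 2 d + C * d ^ (u / 2))
          * 2 ^ (Real.logb 2 c * (d : ℝ) ^ (u / 2))) := by
        gcongr
        exact cast_pow_le_two_rpow hc (by omega)
    _ = _ := by rw [← Real.rpow_add two_pos, add_assoc, ← add_mul]

/-- For every fixed odd `k ≥ 5`, with `t = ⌊(k−2)/2⌋ = (k−3)/2`, there is a
constant `C_k` such that for every `n ≥ 1`,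
`p_k(n) ≤ n·2^((1/t!)·α(n)^t·log₂ α(n) + C_k·α(n)^t)`. -/
theorem pk_odd_upper_bound :
    ∀ k : ℕ, 5 ≤ k → k % 2 = 1 → ∃ C : ℝ, ∀ n : ℕ, 1 ≤ n →
      (pFull k n : ℝ) ≤ (n : ℝ) * (2 : ℝ) ^
        ((1 / (Nat.factorial ((k - 2) / 2) : ℝ)) * (invAck n : ℝ) ^ ((k - 2) / 2)
            * Real.logb 2 (invAck n)
          + C * (invAck n : ℝ) ^ ((k - 2) / 2)) :=
  fun k hk _ ↦ pk_odd_upper_bound_general k (by omega)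
end

section
/- There exists a constant C such that for every integer n ≥ 1 there is an n×n (0,1)-matrix that is not 4-full and has at least 2·n·α(n) − C·n 1-entries; in other words, p₃(n) ≥ 2·n·α(n) − C·n. -/
/-!
A 4-full matrix contains two columns and four rows in which the entries alternate, that is, the
pattern `DS 4`, so it is enough to construct dense `DS 4`-avoiding matrices. As for
Davenport–Schinzel sequences of order three, they come from a double recursion. Consider matrices
`M` in which the topmost entries of the columns lie in groups of `m₁` in certain rows and the
bottommost entries lie in groups of `m₂` in certain other rows. In such an outer matrix, put before
each row of topmost entries a copy of a matrix `M₁` with new columns of its own, and let each outer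
column with an entry in this row get a new topmost entry in the copy, in the row of topmost entries
of `M₁` reserved for it; treat the bottommost entries in the same way with a second matrix `M₂`.
The groups of `M₁` and `M₂` grow by one and the outer columns gain two entries, while `DS 4` is
still avoided. Stage `d` of this recursion gives columns with `2 * d + 2` entries, and the sizes of
its matrices grow like the inverse of `alphaHier (d + 3)`. Hence at size `n` the recursion can be
run up to a stage within a constant of `invAck n`, and block diagonal copies fill the matrix.
-/

/-! ## The inverse of the Ackermann hierarchy -/

/-- The rapidly growing function inverse to `alphaHier k`: `alphaInv k j` bounds from below
every `m` with `j ≤ alphaHier k m`. -/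
def alphaInv : ℕ → ℕ → ℕ
  | 0, j => j
  | 1, j => 2 * j - 1
  | _ + 2, 0 => 0
  | _ + 2, 1 => 2
  | k + 2, j + 2 => alphaInv (k + 1) (alphaInv (k + 2) (j + 1))

lemma alphaInv_one_right (k : ℕ) : alphaInv (k + 2) 1 = 2 := by
  simp only [alphaInv]

lemma alphaInv_succ_succ (k j : ℕ) :
    alphaInv (k + 2) (j + 2) = alphaInv (k + 1) (alphaInv (k + 2) (j + 1)) := by
  rw [alphaInv]

lemma alphaInv_le_of_le_iterCount {k : ℕ} {f : ℕ → ℕ}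
    (hf : ∀ m j, j ≤ f m → alphaInv (k + 1) j ≤ m) (fuel : ℕ) :
    ∀ m j, j ≤ iterCount f fuel m → alphaInv (k + 2) j ≤ m := by
  induction fuel with
  | zero =>
    intro m j hj
    obtain rfl : j = 0 := by simpa only [iterCount, Nat.le_zero] using hj
    simp only [alphaInv, zero_le]
  | succ fuel ih =>
    intro m j hj
    rw [iterCount] at hj
    match j with
    | 0 => simp only [alphaInv, zero_le]
    | 1 =>
      rw [alphaInv_one_right]
      grind
    | j + 2 =>
      have hm : ¬ m ≤ 1 := by grind
      rw [if_neg hm] at hj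
      rw [alphaInv_succ_succ]
      exact hf _ _ (ih _ _ (by lia))

lemma alphaInv_le_of_le_alphaHier {k j m : ℕ} (h : j ≤ alphaHier k m) : alphaInv k j ≤ m := by
  induction k generalizing j m with
  | zero => simpa only [alphaInv, alphaHier] using h
  | succ k ih =>
    cases k with
    | zero =>
      rw [alphaHier] at h
      rw [alphaInv]
      lia
    | succ k =>
      rw [alphaHier] at h
      exact alphaInv_le_of_le_iterCount (fun _ _ => ih) m m j h

lemma alphaInv_two_succ (j : ℕ) : alphaInv 2 (j + 1) = 2 ^ j + 1 := by
  induction j with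
  | zero => rw [alphaInv_one_right, pow_zero]
  | succ j ih =>
    rw [alphaInv_succ_succ, ih, alphaInv, pow_succ]
    lia

lemma two_pow_lt_alphaInv (k j : ℕ) : 2 ^ j < alphaInv (k + 2) (j + 1) := by
  induction k generalizing j with
  | zero => simp only [Nat.zero_add, alphaInv_two_succ, Nat.lt_add_one]
  | succ k ih =>
    induction j with
    | zero => norm_num [alphaInv_one_right]
    | succ j ihj =>
      obtain ⟨m, hm⟩ := Nat.exists_eq_add_of_lt ihj
      have hj : j < 2 ^ j := Nat.lt_two_pow_self
      rw [alphaInv_succ_succ, hm]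
      calc 2 ^ (j + 1) ≤ 2 ^ (2 ^ j + m) := Nat.pow_le_pow_right two_pos (by lia)
        _ < _ := ih _

lemma lt_alphaInv (k : ℕ) {j : ℕ} (hj : j ≠ 0) : j < alphaInv (k + 2) j := by
  obtain ⟨j, rfl⟩ := Nat.exists_eq_succ_of_ne_zero hj
  exact Nat.lt_of_le_of_lt Nat.lt_two_pow_self (two_pow_lt_alphaInv k j)

lemma alphaInv_strictMono (k : ℕ) : StrictMono (alphaInv (k + 2)) := by
  refine strictMono_nat_of_lt_succ fun j => ?_
  cases j with
  | zero => simp [alphaInv]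
  | succ j =>
    cases k with
    | zero =>
      rw [alphaInv_two_succ, alphaInv_two_succ]
      gcongr <;> lia
    | succ k =>
      rw [alphaInv_succ_succ]
      exact lt_alphaInv k (two_pow_lt_alphaInv (k + 1) j).ne_bot

lemma succ_sq_le_two_pow {n : ℕ} (hn : 6 ≤ n) : (n + 1) ^ 2 ≤ 2 ^ n := by
  induction n, hn using Nat.le_induction with
  | base => norm_num
  | succ n hn ih =>
    rw [pow_succ 2]
    nlinarith

lemma mul_alphaInv_le_alphaInv_succ (k : ℕ) {x : ℕ} (hx : 4 ≤ x) :
    x * alphaInv (k + 3) x ≤ alphaInv (k + 3) (x + 1) := by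
  obtain ⟨x, rfl⟩ := Nat.exists_eq_add_of_le' (Nat.one_le_of_lt hx)
  obtain ⟨y, hy⟩ := Nat.exists_eq_add_of_lt (two_pow_lt_alphaInv (k + 1) x)
  have hpow : 2 ^ 3 ≤ 2 ^ x := Nat.pow_le_pow_right (by norm_num) (by lia)
  have hxy : x + 1 ≤ 2 ^ x + y + 1 := by
    have := Nat.lt_two_pow_self (n := x)
    lia
  rw [alphaInv_succ_succ, hy]
  calc (x + 1) * (2 ^ x + y + 1) ≤ (2 ^ x + y + 1) ^ 2 := by
        rw [sq]
        gcongr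
    _ ≤ 2 ^ (2 ^ x + y) := succ_sq_le_two_pow (by lia)
    _ ≤ alphaInv (k + 2) (2 ^ x + y + 1) := (two_pow_lt_alphaInv k _).le

lemma alphaInv_two_right (k : ℕ) : alphaInv (k + 2) 2 = 3 := by
  induction k with
  | zero => rw [alphaInv_two_succ, pow_one]
  | succ k ih => rw [alphaInv_succ_succ, alphaInv_one_right, ih]

lemma alphaInv_three_right (k : ℕ) : alphaInv (k + 2) 3 = 5 := by
  induction k with
  | zero => norm_num [alphaInv_two_succ]
  | succ k ih => rw [alphaInv_succ_succ, alphaInv_two_right, ih]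

lemma alphaInv_four_right (k : ℕ) : alphaInv (k + 3) 4 = alphaInv (k + 2) 5 := by
  rw [alphaInv_succ_succ, alphaInv_three_right]

lemma add_lt_alphaInv_four (k : ℕ) : k + 16 < alphaInv (k + 3) 4 := by
  induction k with
  | zero => norm_num [alphaInv_four_right, alphaInv_two_succ]
  | succ k ih =>
    rw [alphaInv_four_right (k + 1)]
    exact Nat.lt_of_le_of_lt ih (alphaInv_strictMono (k + 1) (by norm_num))

lemma two_pow_lt_alphaInv_four (k : ℕ) : 2 ^ (k + 16) < alphaInv (k + 4) 4 := by
  obtain ⟨m, hm⟩ := Nat.exists_eq_add_of_lt (add_lt_alphaInv_four k)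
  rw [alphaInv_four_right, alphaInv_succ_succ (k + 1) 3, hm]
  calc 2 ^ (k + 16) ≤ 2 ^ (k + 16 + m) := Nat.pow_le_pow_right two_pos (by lia)
    _ < _ := two_pow_lt_alphaInv _ _

lemma two_mul_mul_add_six_le_alphaInv {k s u v g : ℕ} (hv : v ≤ 2 * u)
    (hg : 2 * g + 6 ≤ alphaInv (k + 3) (v + 5)) (hu : 2 * u + 6 ≤ alphaInv (k + 4) (s + 1)) :
    2 * (g * u) + 6 ≤ alphaInv (k + 4) (s + 2) := by
  have mono := (alphaInv_strictMono (k + 1)).monotone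
  calc 2 * (g * u) + 6 ≤ (2 * u + 5) * (2 * g + 6) := by nlinarith
    _ ≤ (2 * u + 5) * alphaInv (k + 3) (2 * u + 5) := by
        gcongr
        exact hg.trans (mono (by lia))
    _ ≤ alphaInv (k + 3) (2 * u + 6) := mul_alphaInv_le_alphaInv_succ k (by lia)
    _ ≤ alphaInv (k + 4) (s + 2) := by
        rw [alphaInv_succ_succ (k + 2)]
        exact mono hu

lemma mul_two_pow_mul_le_alphaInv {d u : ℕ} (hu : u ≤ alphaInv (d + 3) (2 ^ (d + 3) + 5)) :
    u * 2 ^ (d + 2) * (d + 1) ≤ alphaInv (d + 5) 4 := by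
  have hpow : 2 ^ (d + 2) + 2 ^ (d + 2) = 2 ^ (d + 3) := by ring
  have hd : d + 3 < 2 ^ (d + 3) := Nat.lt_two_pow_self
  generalize hX : 2 ^ (d + 3) + 5 = X at hu
  calc u * 2 ^ (d + 2) * (d + 1) ≤ alphaInv (d + 3) X * X * (X + 1) := by gcongr <;> lia
    _ = (X + 1) * (X * alphaInv (d + 3) X) := by ring
    _ ≤ (X + 1) * alphaInv (d + 3) (X + 1) := by
        gcongr
        exact mul_alphaInv_le_alphaInv_succ d (by lia)
    _ ≤ alphaInv (d + 3) (X + 2) := mul_alphaInv_le_alphaInv_succ d (by lia)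
    _ ≤ alphaInv (d + 3) (alphaInv (d + 4) 4) := by
        refine (alphaInv_strictMono (d + 1)).monotone (le_trans ?_ (two_pow_lt_alphaInv_four d).le)
        rw [← hX, show d + 16 = (d + 3) + 13 by ring, pow_add 2 (d + 3) 13]
        lia
    _ = alphaInv (d + 5) 4 := by
        rw [alphaInv_four_right (d + 2), alphaInv_succ_succ (d + 2) 3]

lemma alphaInv_four_le_of_lt_invAck {k n : ℕ} (hk : 1 ≤ k) (h : k < invAck n) :
    alphaInv k 4 ≤ n := by
  have hmem : k ∉ {k | 1 ≤ k ∧ alphaHier k n ≤ 3} := Nat.notMem_of_lt_sInf h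
  simp only [Set.mem_ofPred_eq, not_and, not_le] at hmem
  exact alphaInv_le_of_le_alphaHier (hmem hk)

/-! ## Framed matrices -/

open OrderDual

/-- The rows `r₁ < r₂ < r₃ < r₄` show the columns `x`, `y` of `M` in the pattern `DS 4`, that is,
they have entries in the columns `y, x, y, x`, respectively. -/
def Alternates {R C : Type*} [LT R] (M : R → C → Prop) (x y : C) : Prop :=
  ∃ r₁ r₂ r₃ r₄, r₁ < r₂ ∧ r₂ < r₃ ∧ r₃ < r₄ ∧ M r₁ y ∧ M r₂ x ∧ M r₃ y ∧ M r₄ x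

/-- Avoidance of `DS 4` for matrices whose rows and columns are indexed by arbitrary ordered
types, with `M r c` standing for a `1`-entry. -/
def AlternationFree {R C : Type*} [LT R] [LT C] (M : R → C → Prop) : Prop :=
  ∀ x y, x < y → ¬ Alternates M x y

lemma matContains_DS_four_iff {m n : ℕ} {B : Fin m → Fin n → Bool} :
    MatContains B (DS 4) ↔ ∃ x y, x < y ∧ Alternates (fun i j => B i j = true) x y := by
  constructor
  · rintro ⟨r, c, hr, hc, h⟩
    exact ⟨c 0, c 1, hc (by decide), r 0, r 1, r 2, r 3, hr (by decide), hr (by decide),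
      hr (by decide), h 0 1 (by decide), h 1 0 (by decide), h 2 1 (by decide), h 3 0 (by decide)⟩
  · rintro ⟨x, y, hxy, r₁, r₂, r₃, r₄, h₁₂, h₂₃, h₃₄, h₁, h₂, h₃, h₄⟩
    refine ⟨![r₁, r₂, r₃, r₄], ![x, y], ?_, ?_, ?_⟩
    · simp [Fin.strictMono_iff_lt_succ, Fin.forall_fin_succ, h₁₂, h₂₃, h₃₄]
    · simp [Fin.strictMono_iff_lt_succ, hxy]
    · simp [Fin.forall_fin_succ, DS, h₁, h₂, h₃, h₄]

lemma IsFull.matContains_DS_four {n : ℕ} {M : Fin n → Fin n → Bool} (h : IsFull 4 M) :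
    MatContains M (DS 4) := by
  obtain ⟨c, hc, hσ⟩ := h
  obtain ⟨r, hr, hM⟩ := hσ Fin.revPerm
  obtain ⟨s, hs, hN⟩ := hσ (Equiv.swap 0 1 * Equiv.swap 2 3)
  rw [matContains_DS_four_iff]
  -- Whichever of the two middle rows comes first, two rows of each permutation can be combined.
  rcases lt_or_ge (s 1) (r 2) with hlt | hge
  · exact ⟨c 0, c 1, hc (by decide), s 0, s 1, r 2, r 3, hs (by decide), hlt, hr (by decide),
      hN 1, hN 0, hM 1, hM 0⟩
  · refine ⟨c 2, c 3, hc (by decide), r 0, r 1, s 2, s 3, hr (by decide), ?_, hs (by decide),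
      hM 3, hM 2, hN 3, hN 2⟩
    calc r 1 < r 2 := hr (by decide)
      _ ≤ s 1 := hge
      _ < s 2 := hs (by decide)

/-- The matrix `M` rotated by 180 degrees. The pattern `DS 4` is invariant under this rotation. -/
def rot {R C : Type*} (M : R → C → Prop) : Rᵒᵈ → Cᵒᵈ → Prop :=
  fun r c => M (ofDual r) (ofDual c)

lemma alternates_rot {R C : Type*} [LT R] {M : R → C → Prop} {x y : Cᵒᵈ} :
    Alternates (rot M) x y ↔ Alternates M (ofDual y) (ofDual x) :=
  ⟨fun ⟨r₁, r₂, r₃, r₄, h₁₂, h₂₃, h₃₄, h₁, h₂, h₃, h₄⟩ =>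
    ⟨ofDual r₄, ofDual r₃, ofDual r₂, ofDual r₁, h₃₄, h₂₃, h₁₂, h₄, h₃, h₂, h₁⟩,
  fun ⟨r₁, r₂, r₃, r₄, h₁₂, h₂₃, h₃₄, h₁, h₂, h₃, h₄⟩ =>
    ⟨toDual r₄, toDual r₃, toDual r₂, toDual r₁, h₃₄, h₂₃, h₁₂, h₄, h₃, h₂, h₁⟩⟩

lemma AlternationFree.rot {R C : Type*} [LT R] [LT C] {M : R → C → Prop}
    (h : AlternationFree M) : AlternationFree (rot M) :=
  fun _ _ hxy halt => h _ _ hxy (alternates_rot.1 halt)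

/-- The rows in `s` contain the topmost entry of every column, and each of them contains exactly
`m` entries. Among two columns with their topmost entries in the same row, the right one has no
later entry above an entry of the left one, apart from that row. -/
structure IsOpening {R C : Type*} [Preorder R] [LT C] (M : R → C → Prop) (s : Set R) (m : ℕ) :
    Prop where
  exists_mem (c : C) : ∃ r ∈ s, M r c
  le_of_mem {r r' : R} {c : C} (hr : r ∈ s) (hrc : M r c) (hr'c : M r' c) : r ≤ r'
  ncard_row {r : R} (hr : r ∈ s) : {c | M r c}.ncard = m
  lt_of_mem {r r₁ r₂ : R} {x y : C} (hr : r ∈ s) (hxy : x < y) (hx : M r x) (hy : M r y)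
    (hr₁ : r < r₁) (h₁ : M r₁ y) (h₂ : M r₂ x) : r₂ < r₁

/-- The notion dual to `IsOpening` under rotation: the rows in `s` contain the bottommost entries
of the columns. -/
def IsClosing {R C : Type*} [Preorder R] [LT C] (M : R → C → Prop) (s : Set R) (m : ℕ) : Prop :=
  IsOpening (rot M) (ofDual ⁻¹' s) m

/-- An alternation-free matrix whose columns all begin in a row of `fi` and end in a row of `la`;
the rows of `fi` contain `m₁` entries and those of `la` contain `m₂` entries. -/
structure IsFramed {R C : Type*} [Preorder R] [LT C] (M : R → C → Prop) (fi la : Set R)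
    (m₁ m₂ : ℕ) : Prop where
  alternationFree : AlternationFree M
  disjoint : Disjoint fi la
  isOpening : IsOpening M fi m₁
  isClosing : IsClosing M la m₂

lemma IsOpening.of_isEmpty {R C : Type*} [Preorder R] [LT C] [IsEmpty C] {M : R → C → Prop}
    {s : Set R} {m : ℕ} (h : s = ∅ ∨ m = 0) : IsOpening M s m where
  exists_mem := isEmptyElim
  le_of_mem {_ _ c} := isEmptyElim c
  ncard_row {r} hr := by
    rw [Set.eq_empty_of_isEmpty {c | M r c}, Set.ncard_empty]
    exact (h.resolve_left (Set.nonempty_of_mem hr).ne_empty).symm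
  lt_of_mem {_ _ _ x} := isEmptyElim x

lemma IsOpening.comap {R C R' C' : Type*} [Preorder R] [Preorder C] [Preorder R'] [Preorder C']
    {M : R → C → Prop} {s : Set R} {m : ℕ} (h : IsOpening M s m) (e : R' ≃o R) (f : C' ≃o C) :
    IsOpening (fun r c => M (e r) (f c)) (e ⁻¹' s) m where
  exists_mem c := by
    obtain ⟨r, hr, hrc⟩ := h.exists_mem (f c)
    exact ⟨e.symm r, by simpa using hr, by simpa using hrc⟩
  le_of_mem hr hrc hr'c := e.le_iff_le.1 (h.le_of_mem hr hrc hr'c)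
  ncard_row {r} hr := by
    rw [← h.ncard_row hr]
    exact Nat.card_congr (f.toEquiv.subtypeEquiv fun _ => Iff.rfl)
  lt_of_mem hr hxy hx hy hr₁ h₁ h₂ :=
    e.lt_iff_lt.1 (h.lt_of_mem hr (f.lt_iff_lt.2 hxy) hx hy (e.lt_iff_lt.2 hr₁) h₁ h₂)

lemma IsOpening.card_cols {R C : Type*} [PartialOrder R] [LT C] [Finite R] [Finite C]
    {M : R → C → Prop} {s : Set R} {m : ℕ} (h : IsOpening M s m) :
    Nat.card C = s.ncard * m := by
  have hunique (c : C) : ∃! r : s, M r c := by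
    obtain ⟨r, hr, hrc⟩ := h.exists_mem c
    exact ⟨⟨r, hr⟩, hrc, fun r' hr' =>
      Subtype.ext ((h.le_of_mem r'.2 hr' hrc).antisymm (h.le_of_mem hr hrc hr'))⟩
  choose top htop hunique using hunique
  have hrow (r : s) : Nat.card {c // top c = r} = m := by
    rw [← h.ncard_row r.2]
    exact Nat.card_congr (Equiv.subtypeEquivRight fun c =>
      ⟨fun hc => hc ▸ htop c, fun hc => (hunique c r hc).symm⟩)
  have := Fintype.ofFinite s
  rw [← Nat.card_congr (Equiv.sigmaFiberEquiv top), Nat.card_sigma]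
  simp only [hrow, Finset.sum_const, Finset.card_univ, smul_eq_mul, ← Nat.card_eq_fintype_card,
    Nat.card_coe_set_eq]

/-- `S` is the graph of an order isomorphism from `A` to `B`. -/
structure IsOrderGraph {α β : Type*} [LT α] [LT β] (A : Set α) (B : Set β)
    (S : α → β → Prop) : Prop where
  mem_left {a : α} {b : β} (h : S a b) : a ∈ A
  mem_right {a : α} {b : β} (h : S a b) : b ∈ B
  exists_right {a : α} (ha : a ∈ A) : ∃ b, S a b
  exists_left {b : β} (hb : b ∈ B) : ∃ a, S a b
  lt_iff_lt {a a' : α} {b b' : β} (h : S a b) (h' : S a' b') : a < a' ↔ b < b'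

namespace IsOrderGraph

variable {α β : Type*} [LinearOrder α] [LinearOrder β] {A : Set α} {B : Set β} {S : α → β → Prop}

lemma dual (h : IsOrderGraph A B S) :
    IsOrderGraph (ofDual ⁻¹' A) (ofDual ⁻¹' B) (rot S) where
  mem_left := h.mem_left
  mem_right := h.mem_right
  exists_right := h.exists_right
  exists_left := h.exists_left
  lt_iff_lt hab hab' := h.lt_iff_lt hab' hab

lemma right_unique (h : IsOrderGraph A B S) {a : α} {b b' : β} (hb : S a b) (hb' : S a b') :
    b = b' :=
  le_antisymm (not_lt.1 ((h.lt_iff_lt hb' hb).not.1 (lt_irrefl a)))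
    (not_lt.1 ((h.lt_iff_lt hb hb').not.1 (lt_irrefl a)))

lemma left_unique (h : IsOrderGraph A B S) {a a' : α} {b : β} (ha : S a b) (ha' : S a' b) :
    a = a' :=
  le_antisymm (not_lt.1 ((h.lt_iff_lt ha' ha).not.2 (lt_irrefl b)))
    (not_lt.1 ((h.lt_iff_lt ha ha').not.2 (lt_irrefl b)))

end IsOrderGraph

lemma exists_isOrderGraph {α β : Type*} [LinearOrder α] [LinearOrder β] [Finite α] [Finite β]
    {A : Set α} {B : Set β} (h : A.ncard = B.ncard) : ∃ S, IsOrderGraph A B S := by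
  have := Fintype.ofFinite A
  have := Fintype.ofFinite B
  have eA := Fintype.orderIsoFinOfCardEq A Nat.card_eq_fintype_card.symm
  have eB := Fintype.orderIsoFinOfCardEq B (Nat.card_eq_fintype_card.symm.trans h.symm)
  let e : A ≃o B := eA.symm.trans eB
  refine ⟨fun a b => ∃ ha : a ∈ A, e ⟨a, ha⟩ = b, ?_, ?_, ?_, ?_, ?_⟩
  · exact fun ⟨ha, _⟩ => ha
  · rintro a _ ⟨ha, rfl⟩
    exact (e ⟨a, ha⟩).2
  · exact fun ha => ⟨_, ha, rfl⟩
  · exact fun {b} hb => ⟨e.symm ⟨b, hb⟩, (e.symm ⟨b, hb⟩).2, by simp⟩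
  · rintro a a' _ _ ⟨ha, rfl⟩ ⟨ha', rfl⟩
    rw [Subtype.coe_lt_coe, e.lt_iff_lt, Subtype.mk_lt_mk]

/-! ## Composition of matrices -/

/-- The rows of a composite matrix: every row `p ∈ s` of the outer matrix is preceded by a copy of
`R₁`, and every row `q ∈ t` is followed by a copy of `R₂`. -/
inductive CompRow {R : Type*} (s t : Set R) (R₁ R₂ : Type*)
  | outer (r : R)
  | left (p : R) (hp : p ∈ s) (i : R₁)
  | right (q : R) (hq : q ∈ t) (i : R₂)

/-- The columns of a composite matrix: first a copy of `C₁` for every `p ∈ s`, then the columns of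
the outer matrix, then a copy of `C₂` for every `q ∈ t`. -/
inductive CompCol {R : Type*} (s t : Set R) (C₁ C C₂ : Type*)
  | left (p : R) (hp : p ∈ s) (x : C₁)
  | outer (c : C)
  | right (q : R) (hq : q ∈ t) (x : C₂)

/-- The composite of an outer matrix `M` with matrices `M₁` and `M₂`, where `S p` and `T q` record
in which rows of the copy of `M₁` at `p` and of the copy of `M₂` at `q` the columns of the outer
matrix get an additional entry. -/
def compMat {R R₁ R₂ C C₁ C₂ : Type*} {s t : Set R} (M : R → C → Prop) (M₁ : R₁ → C₁ → Prop)
    (M₂ : R₂ → C₂ → Prop) (S : R → C → R₁ → Prop) (T : R → C → R₂ → Prop) :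
    CompRow s t R₁ R₂ → CompCol s t C₁ C C₂ → Prop
  | .outer r, .outer c => M r c
  | .left p _ i, .left p' _ x => p' = p ∧ M₁ i x
  | .left p _ i, .outer c => S p c i
  | .right q _ i, .outer c => T q c i
  | .right q _ i, .right q' _ x => q' = q ∧ M₂ i x
  | _, _ => False

namespace CompRow

variable {R R₁ R₂ : Type*} {s t : Set R}

/-- The row of the outer matrix to which a row of the composite belongs. -/
def proj : CompRow s t R₁ R₂ → R
  | outer r => r
  | left p _ _ => p
  | right q _ _ => q

/-- The rows of the composite that belong to `s₁` in a copy of `R₁` or to `s₂` in a copy of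
`R₂`. -/
def inner (s₁ : Set R₁) (s₂ : Set R₂) : Set (CompRow s t R₁ R₂)
  | outer _ => False
  | left _ _ i => i ∈ s₁
  | right _ _ i => i ∈ s₂

/-- The rows of the composite as a disjoint sum, for counting. -/
def equivSum : CompRow s t R₁ R₂ ≃ R ⊕ s × R₁ ⊕ t × R₂ where
  toFun
    | outer r => .inl r
    | left p hp i => .inr (.inl (⟨p, hp⟩, i))
    | right q hq i => .inr (.inr (⟨q, hq⟩, i))
  invFun
    | .inl r => outer r
    | .inr (.inl (p, i)) => left p.1 p.2 i
    | .inr (.inr (q, i)) => right q.1 q.2 i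
  left_inv := by rintro (_ | _ | _) <;> rfl
  right_inv := by rintro (_ | _ | _) <;> rfl

/-- The rows of `inner s₁ s₂` as a disjoint sum, for counting. -/
def innerEquivSum (s₁ : Set R₁) (s₂ : Set R₂) :
    (inner s₁ s₂ : Set (CompRow s t R₁ R₂)) ≃ s × s₁ ⊕ t × s₂ where
  toFun
    | ⟨left p hp i, hi⟩ => .inl (⟨p, hp⟩, ⟨i, hi⟩)
    | ⟨right q hq i, hi⟩ => .inr (⟨q, hq⟩, ⟨i, hi⟩)
  invFun
    | .inl (p, i) => ⟨left p.1 p.2 i.1, i.2⟩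
    | .inr (q, i) => ⟨right q.1 q.2 i.1, i.2⟩
  left_inv := by
    rintro ⟨_ | _ | _, h⟩
    · exact h.elim
    · rfl
    · rfl
  right_inv := by rintro (_ | _) <;> rfl

instance [Finite R] [Finite R₁] [Finite R₂] : Finite (CompRow s t R₁ R₂) :=
  Finite.of_equiv _ equivSum.symm

lemma card_eq [Finite R] [Finite R₁] [Finite R₂] :
    Nat.card (CompRow s t R₁ R₂) =
      Nat.card R + (s.ncard * Nat.card R₁ + t.ncard * Nat.card R₂) := by
  simp only [Nat.card_congr equivSum, Nat.card_sum, Nat.card_prod, Nat.card_coe_set_eq]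

lemma ncard_inner [Finite R] [Finite R₁] [Finite R₂] (s₁ : Set R₁) (s₂ : Set R₂) :
    (inner s₁ s₂ : Set (CompRow s t R₁ R₂)).ncard =
      s.ncard * s₁.ncard + t.ncard * s₂.ncard := by
  simp only [← Nat.card_coe_set_eq, Nat.card_congr (innerEquivSum s₁ s₂), Nat.card_sum,
    Nat.card_prod]

lemma disjoint_inner {s₁ t₁ : Set R₁} {s₂ t₂ : Set R₂} (h₁ : Disjoint s₁ t₁)
    (h₂ : Disjoint s₂ t₂) :
    Disjoint (inner s₁ s₂) (inner t₁ t₂ : Set (CompRow s t R₁ R₂)) := by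
  rw [Set.disjoint_left] at *
  rintro (_ | ⟨_, _, i⟩ | ⟨_, _, i⟩) h
  · exact h.elim
  · exact h₁ h
  · exact h₂ h

/-- The position of a row of the composite: the outer row `p` lies between the copies of `R₁` and
of `R₂` at `p`. -/
def key : CompRow s t R₁ R₂ → R ×ₗ (R₁ ⊕ₗ (Unit ⊕ₗ R₂))
  | outer r => toLex (r, Sum.inrₗ (Sum.inlₗ ()))
  | left p _ i => toLex (p, Sum.inlₗ i)
  | right q _ i => toLex (q, Sum.inrₗ (Sum.inrₗ i))

lemma key_injective : Function.Injective (key : CompRow s t R₁ R₂ → _) := by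
  rintro (_ | _ | _) (_ | _ | _) h <;> simp_all [key, Sum.inlₗ, Sum.inrₗ]

variable [LinearOrder R] [LinearOrder R₁] [LinearOrder R₂]

noncomputable instance : LinearOrder (CompRow s t R₁ R₂) :=
  LinearOrder.lift' key key_injective

/-- The order of the rows of the composite, spelled out by cases. -/
def Lt : CompRow s t R₁ R₂ → CompRow s t R₁ R₂ → Prop
  | outer r, outer r' => r < r'
  | outer r, left p _ _ => r < p
  | outer r, right q _ _ => r ≤ q
  | left p _ _, outer r => p ≤ r
  | left p _ i, left p' _ i' => p < p' ∨ p = p' ∧ i < i'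
  | left p _ _, right q _ _ => p ≤ q
  | right q _ _, outer r => q < r
  | right q _ _, left p _ _ => q < p
  | right q _ i, right q' _ i' => q < q' ∨ q = q' ∧ i < i'

lemma lt_iff {a b : CompRow s t R₁ R₂} : a < b ↔ a.Lt b := by
  change a.key < b.key ↔ a.Lt b
  cases a <;> cases b <;>
    simp [key, Lt, Prod.Lex.lt_iff, Sum.inlₗ, Sum.inrₗ, le_iff_lt_or_eq]

lemma proj_le_proj {a b : CompRow s t R₁ R₂} (h : a < b) : a.proj ≤ b.proj := by
  rw [lt_iff] at h
  cases a <;> cases b <;> simp only [Lt, proj] at * <;> grind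

lemma proj_mem_or_mem {r₁ r₂ : CompRow s t R₁ R₂} (h : r₁ < r₂) (hproj : r₁.proj = r₂.proj) :
    r₁.proj ∈ s ∨ r₁.proj ∈ t := by
  rw [lt_iff] at h
  cases r₁ <;> cases r₂ <;> simp only [Lt, proj] at * <;> grind

/-- Rotation exchanges the copies of `R₁` with those of `R₂`. -/
def rotIso : (CompRow s t R₁ R₂)ᵒᵈ ≃o CompRow (ofDual ⁻¹' t) (ofDual ⁻¹' s) R₂ᵒᵈ R₁ᵒᵈ where
  toFun a := match ofDual a with
    | outer r => outer (toDual r)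
    | left p hp i => right (toDual p) hp (toDual i)
    | right q hq i => left (toDual q) hq (toDual i)
  invFun
    | outer r => toDual (outer (ofDual r))
    | left q hq i => toDual (right (ofDual q) hq (ofDual i))
    | right p hp i => toDual (left (ofDual p) hp (ofDual i))
  left_inv := by rintro (_ | _ | _) <;> rfl
  right_inv := by rintro (_ | _ | _) <;> rfl
  map_rel_iff' {a b} := by
    obtain ⟨a, rfl⟩ := toDual.surjective a
    obtain ⟨b, rfl⟩ := toDual.surjective b
    rw [← not_lt, ← not_lt, not_iff_not, toDual_lt_toDual, lt_iff, lt_iff]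
    cases a <;> cases b <;> simp [Lt, eq_comm]

lemma rotIso_lt_rotIso {a b : CompRow s t R₁ R₂} :
    rotIso (toDual a) < rotIso (toDual b) ↔ b < a :=
  (rotIso (s := s) (t := t) (R₁ := R₁) (R₂ := R₂)).lt_iff_lt.trans toDual_lt_toDual

end CompRow

namespace CompCol

variable {R C C₁ C₂ : Type*} {s t : Set R}

/-- The position of a column of the composite. -/
def key : CompCol s t C₁ C C₂ → (R ×ₗ C₁) ⊕ₗ (C ⊕ₗ (R ×ₗ C₂))
  | left p _ x => Sum.inlₗ (toLex (p, x))
  | outer c => Sum.inrₗ (Sum.inlₗ c)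
  | right q _ x => Sum.inrₗ (Sum.inrₗ (toLex (q, x)))

lemma key_injective : Function.Injective (key : CompCol s t C₁ C C₂ → _) := by
  rintro (_ | _ | _) (_ | _ | _) h <;> simp_all [key, Sum.inlₗ, Sum.inrₗ]

instance [Finite R] [Finite C] [Finite C₁] [Finite C₂] : Finite (CompCol s t C₁ C C₂) :=
  have : Finite ((R ×ₗ C₁) ⊕ₗ (C ⊕ₗ (R ×ₗ C₂))) :=
    inferInstanceAs (Finite ((R × C₁) ⊕ (C ⊕ (R × C₂))))
  Finite.of_injective key key_injective

variable [LinearOrder R] [LinearOrder C] [LinearOrder C₁] [LinearOrder C₂]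

noncomputable instance : LinearOrder (CompCol s t C₁ C C₂) :=
  LinearOrder.lift' key key_injective

/-- The order of the columns of the composite, spelled out by cases. -/
def Lt : CompCol s t C₁ C C₂ → CompCol s t C₁ C C₂ → Prop
  | left p _ x, left p' _ x' => p < p' ∨ p = p' ∧ x < x'
  | left _ _ _, _ => True
  | outer c, outer c' => c < c'
  | outer _, right _ _ _ => True
  | right q _ x, right q' _ x' => q < q' ∨ q = q' ∧ x < x'
  | _, _ => False

lemma lt_iff {a b : CompCol s t C₁ C C₂} : a < b ↔ a.Lt b := by
  change a.key < b.key ↔ a.Lt b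
  cases a <;> cases b <;> simp [key, Lt, Prod.Lex.lt_iff, Sum.inlₗ, Sum.inrₗ]

/-- Rotation exchanges the copies of `C₁` with those of `C₂`. -/
def rotIso :
    (CompCol s t C₁ C C₂)ᵒᵈ ≃o CompCol (ofDual ⁻¹' t) (ofDual ⁻¹' s) C₂ᵒᵈ Cᵒᵈ C₁ᵒᵈ where
  toFun a := match ofDual a with
    | left p hp x => right (toDual p) hp (toDual x)
    | outer c => outer (toDual c)
    | right q hq x => left (toDual q) hq (toDual x)
  invFun
    | left q hq x => toDual (right (ofDual q) hq (ofDual x))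
    | outer c => toDual (outer (ofDual c))
    | right p hp x => toDual (left (ofDual p) hp (ofDual x))
  left_inv := by rintro (_ | _ | _) <;> rfl
  right_inv := by rintro (_ | _ | _) <;> rfl
  map_rel_iff' {a b} := by
    obtain ⟨a, rfl⟩ := toDual.surjective a
    obtain ⟨b, rfl⟩ := toDual.surjective b
    rw [← not_lt, ← not_lt, not_iff_not, toDual_lt_toDual, lt_iff, lt_iff]
    cases a <;> cases b <;> simp [Lt, eq_comm]

lemma rotIso_lt_rotIso {a b : CompCol s t C₁ C C₂} :
    rotIso (toDual a) < rotIso (toDual b) ↔ b < a :=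
  (rotIso (s := s) (t := t) (C₁ := C₁) (C := C) (C₂ := C₂)).lt_iff_lt.trans toDual_lt_toDual

end CompCol

/-- For every row `r ∈ s` of `M`, the relation `S r` matches the columns with an entry in row `r`
with the rows in `B`, from left to right and from top to bottom. -/
def MatchesColumns {R C R' : Type*} [LT C] [LT R'] (M : R → C → Prop) (s : Set R) (B : Set R')
    (S : R → C → R' → Prop) : Prop :=
  ∀ ⦃r⦄, r ∈ s → IsOrderGraph {c | M r c} B (S r)

lemma exists_matchesColumns {R C R' : Type*} [LinearOrder C] [LinearOrder R'] [Finite C]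
    [Finite R'] {M : R → C → Prop} {s : Set R} {B : Set R'}
    (h : ∀ r ∈ s, {c | M r c}.ncard = B.ncard) : ∃ S, MatchesColumns M s B S := by
  choose! S hS using fun r hr => exists_isOrderGraph (h r hr)
  exact ⟨S, hS⟩

lemma MatchesColumns.rot {R C R' : Type*} [LinearOrder C] [LinearOrder R'] {M : R → C → Prop}
    {s : Set R} {B : Set R'} {S : R → C → R' → Prop} (hS : MatchesColumns M s B S) :
    MatchesColumns (rot M) (ofDual ⁻¹' s) (ofDual ⁻¹' B) (fun r => _root_.rot (S (ofDual r))) :=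
  fun _ hr => (hS hr).dual

namespace CompMat

variable {R R₁ R₂ C C₁ C₂ : Type*} {s t : Set R} {M : R → C → Prop} {M₁ : R₁ → C₁ → Prop}
  {M₂ : R₂ → C₂ → Prop} {S : R → C → R₁ → Prop} {T : R → C → R₂ → Prop} {fi₁ la₁ : Set R₁}
  {fi₂ la₂ : Set R₂} {a b m : ℕ}

lemma setOf_compMat_left (p : R) (hp : p ∈ s) (i : R₁) :
    {c : CompCol s t C₁ C C₂ | compMat M M₁ M₂ S T (.left p hp i : CompRow s t R₁ R₂) c} =
      .outer '' {c | S p c i} ∪ .left p hp '' {x | M₁ i x} := by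
  ext (_ | _ | _) <;> simp [compMat, eq_comm, and_comm]

lemma setOf_compMat_right (q : R) (hq : q ∈ t) (i : R₂) :
    {c : CompCol s t C₁ C C₂ | compMat M M₁ M₂ S T (.right q hq i : CompRow s t R₁ R₂) c} =
      .outer '' {c | T q c i} ∪ .right q hq '' {x | M₂ i x} := by
  ext (_ | _ | _) <;> simp [compMat, eq_comm, and_comm]

lemma eq_and_alternates_of_left [LinearOrder R] [LinearOrder R₁] [LinearOrder R₂]
    {p p' : R} {hp : p ∈ s} {hp' : p' ∈ s} {x y : C₁}
    (h : Alternates (compMat M M₁ M₂ S T : CompRow s t R₁ R₂ → CompCol s t C₁ C C₂ → Prop)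
      (.left p hp x) (.left p' hp' y)) : p = p' ∧ Alternates M₁ x y := by
  obtain ⟨r₁, r₂, r₃, r₄, h₁₂, h₂₃, h₃₄, h₁, h₂, h₃, h₄⟩ := h
  cases r₁ <;> simp only [compMat] at h₁
  cases r₂ <;> simp only [compMat] at h₂
  cases r₃ <;> simp only [compMat] at h₃
  cases r₄ <;> simp only [compMat] at h₄
  obtain ⟨rfl, h₁⟩ := h₁
  obtain ⟨rfl, h₂⟩ := h₂
  obtain ⟨rfl, h₃⟩ := h₃
  obtain ⟨rfl, h₄⟩ := h₄
  have hle : p' ≤ p := CompRow.proj_le_proj h₁₂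
  have hge : p ≤ p' := CompRow.proj_le_proj h₂₃
  obtain rfl := hge.antisymm hle
  simp only [CompRow.lt_iff, CompRow.Lt, lt_self_iff_false, true_and,
    false_or] at h₁₂ h₂₃ h₃₄
  exact ⟨rfl, _, _, _, _, h₁₂, h₂₃, h₃₄, h₁, h₂, h₃, h₄⟩

variable [LinearOrder R₂] [LinearOrder C]

lemma exists_eq_left_of_mem_inner (hT : MatchesColumns M t la₂ T)
    (hdisj : Disjoint fi₂ la₂) {r : CompRow s t R₁ R₂} {c : C} (hr : r ∈ CompRow.inner fi₁ fi₂)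
    (hrc : compMat M M₁ M₂ S T r (.outer c)) :
    ∃ p hp i, r = .left p hp i ∧ S p c i := by
  cases r with
  | outer => exact hr.elim
  | left p hp i => exact ⟨p, hp, i, rfl, hrc⟩
  | right q hq i => exact (Set.disjoint_left.1 hdisj hr ((hT hq).mem_right hrc)).elim

variable [LinearOrder R₁]

lemma of_outer (hS : MatchesColumns M s fi₁ S) (hT : MatchesColumns M t la₂ T)
    {r : CompRow s t R₁ R₂} {c : C} (h : compMat M M₁ M₂ S T r (.outer c)) : M r.proj c := by
  cases r with
  | outer => exact h
  | left p hp => exact (hS hp).mem_left h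
  | right q hq => exact (hT hq).mem_left h

section

variable [LinearOrder R]

lemma eq_or_forall_left_lt (h : IsOpening M s a) (hS : MatchesColumns M s fi₁ S)
    (hT : MatchesColumns M t la₂ T) {r : CompRow s t R₁ R₂} {p : R} {c : C} {i : R₁} (hp : p ∈ s)
    (hi : S p c i) (hr : compMat M M₁ M₂ S T r (.outer c)) :
    r = .left p hp i ∨ ∀ i', .left p hp i' < r := by
  have hle : p ≤ r.proj := h.le_of_mem hp ((hS hp).mem_left hi) (of_outer hS hT hr)
  simp only [CompRow.lt_iff]
  cases r with
  | outer r => exact .inr fun _ => hle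
  | right q hq j => exact .inr fun _ => hle
  | left p' hp' j =>
    rcases hle.lt_or_eq with hlt | rfl
    · exact .inr fun _ => .inl hlt
    · exact .inl (by rw [(hS hp).right_unique hi hr])

lemma eq_outer_of_proj_le (h : IsOpening M s a) (hS : MatchesColumns M s fi₁ S)
    (hT : MatchesColumns M t la₂ T) {x y : C} (hxy : x < y) {r₁ r₂ : CompRow s t R₁ R₂}
    (h₁₂ : r₁ < r₂) (h₁ : compMat M M₁ M₂ S T r₁ (.outer y))
    (h₂ : compMat M M₁ M₂ S T r₂ (.outer x)) {p : R} (hp : p ∈ s) (hpt : p ∉ t) (hx : M p x)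
    (hy : M p y) (hle : r₂.proj ≤ p) : r₂ = .outer p := by
  have hproj : r₂.proj = p := hle.antisymm (h.le_of_mem hp hx (of_outer hS hT h₂))
  obtain ⟨i, hi⟩ := (hS hp).exists_right hx
  obtain ⟨j, hj⟩ := (hS hp).exists_right hy
  have hij : i < j := ((hS hp).lt_iff_lt hi hj).1 hxy
  rcases eq_or_forall_left_lt h hS hT hp hi h₂ with rfl | hlt₂
  · rcases eq_or_forall_left_lt h hS hT hp hj h₁ with rfl | hlt₁
    · simp only [CompRow.lt_iff, CompRow.Lt, lt_self_iff_false, true_and, false_or] at h₁₂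
      exact (hij.trans h₁₂).false.elim
    · exact (h₁₂.trans (hlt₁ i)).false.elim
  · cases r₂ with
    | outer r => rw [← hproj, CompRow.proj]
    | left p' hp' i' =>
      subst hproj
      exact (hlt₂ i').false.elim
    | right q hq i' =>
      subst hproj
      exact (hpt hq).elim

lemma false_of_proj_le (h : IsOpening M s a) (hS : MatchesColumns M s fi₁ S)
    (hT : MatchesColumns M t la₂ T) {x y : C} (hxy : x < y)
    {r₁ r₂ r₃ r₄ : CompRow s t R₁ R₂} (h₁₂ : r₁ < r₂) (h₂₃ : r₂ < r₃) (h₃₄ : r₃ < r₄)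
    (h₁ : compMat M M₁ M₂ S T r₁ (.outer y)) (h₂ : compMat M M₁ M₂ S T r₂ (.outer x))
    (h₃ : compMat M M₁ M₂ S T r₃ (.outer y)) (h₄ : compMat M M₁ M₂ S T r₄ (.outer x))
    {p : R} (hp : p ∈ s) (hpt : p ∉ t) (hx : M p x) (hy : M p y) (hle : r₂.proj ≤ p) : False := by
  obtain rfl := eq_outer_of_proj_le h hS hT hxy h₁₂ h₁ h₂ hp hpt hx hy hle
  have hlt : p < r₃.proj := by
    rw [CompRow.lt_iff] at h₂₃
    cases r₃ with
    | outer => exact h₂₃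
    | left => exact h₂₃
    | right q hq => exact h₂₃.lt_of_ne fun hpq => hpt (hpq ▸ hq)
  exact ((h.lt_of_mem hp hxy hx hy hlt (of_outer hS hT h₃) (of_outer hS hT h₄)).trans_le
    (CompRow.proj_le_proj h₃₄)).false

lemma le_ncard_column [Finite R] [Finite R₁] [Finite R₂] {μ : ℕ} (h : IsOpening M s a)
    (h' : IsClosing M t b) (hS : MatchesColumns M s fi₁ S) (hT : MatchesColumns M t la₂ T)
    (hμ : ∀ c, μ ≤ {r | M r c}.ncard) (hμ₁ : ∀ c, μ + 2 ≤ {r | M₁ r c}.ncard)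
    (hμ₂ : ∀ c, μ + 2 ≤ {r | M₂ r c}.ncard) (c : CompCol s t C₁ C C₂) :
    μ + 2 ≤ {r : CompRow s t R₁ R₂ | compMat M M₁ M₂ S T r c}.ncard := by
  cases c with
  | left p hp x =>
    calc μ + 2 ≤ {i | M₁ i x}.ncard := hμ₁ x
      _ = (.left p hp '' {i | M₁ i x} : Set (CompRow s t R₁ R₂)).ncard :=
        (Set.ncard_image_of_injective _ fun i j hij => by simpa using hij).symm
      _ ≤ _ := by
        refine Set.ncard_le_ncard (Set.image_subset_iff.2 fun i hi => ?_)
        exact ⟨rfl, hi⟩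
  | outer c =>
    obtain ⟨p, hp, hpc⟩ := h.exists_mem c
    obtain ⟨q, hq, hqc⟩ := h'.exists_mem (toDual c)
    obtain ⟨i, hi⟩ := (hS hp).exists_right hpc
    obtain ⟨j, hj⟩ := (hT hq).exists_right hqc
    calc μ + 2 ≤ {r | M r c}.ncard + 2 := by gcongr; exact hμ c
      _ = (.outer '' {r | M r c} : Set (CompRow s t R₁ R₂)).ncard + 1 + 1 := by
        rw [Set.ncard_image_of_injective _ fun i j hij => by simpa using hij]
      _ = (insert (.left p hp i) (insert (.right q hq j) (.outer '' {r | M r c})) :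
          Set (CompRow s t R₁ R₂)).ncard := by
        rw [Set.ncard_insert_of_notMem (by simp), Set.ncard_insert_of_notMem (by simp)]
      _ ≤ _ := by
        refine Set.ncard_le_ncard (Set.insert_subset hi (Set.insert_subset hj ?_))
        exact Set.image_subset_iff.2 fun r hr => hr
  | right q hq x =>
    calc μ + 2 ≤ {i | M₂ i x}.ncard := hμ₂ x
      _ = (.right q hq '' {i | M₂ i x} : Set (CompRow s t R₁ R₂)).ncard :=
        (Set.ncard_image_of_injective _ fun i j hij => by simpa using hij).symm
      _ ≤ _ := by
        refine Set.ncard_le_ncard (Set.image_subset_iff.2 fun i hi => ?_)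
        exact ⟨rfl, hi⟩

end

variable [LinearOrder C₁] [LinearOrder C₂]

lemma ncard_row_of_mem_inner [Finite C₁] (h₁ : IsOpening M₁ fi₁ m)
    (h₂ : IsOpening M₂ fi₂ (m + 1)) (hS : MatchesColumns M s fi₁ S)
    (hT : MatchesColumns M t la₂ T) (hdisj : Disjoint fi₂ la₂) {r : CompRow s t R₁ R₂}
    (hr : r ∈ CompRow.inner fi₁ fi₂) :
    {c : CompCol s t C₁ C C₂ | compMat M M₁ M₂ S T r c}.ncard = m + 1 := by
  cases r with
  | outer => exact hr.elim
  | left p hp i =>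
    obtain ⟨c, hc⟩ := (hS hp).exists_left hr
    have hunique : {c | S p c i} = {c} :=
      Set.eq_singleton_iff_unique_mem.2 ⟨hc, fun c' hc' => (hS hp).left_unique hc' hc⟩
    rw [setOf_compMat_left, hunique, Set.image_singleton, Set.singleton_union,
      Set.ncard_insert_of_notMem (by simp), Set.ncard_image_of_injective, h₁.ncard_row hr]
    exact fun x y hxy => by simpa using hxy
  | right q hq i =>
    have hempty : {c | T q c i} = ∅ := Set.eq_empty_iff_forall_notMem.2 fun c hc =>
      Set.disjoint_left.1 hdisj hr ((hT hq).mem_right hc)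
    rw [setOf_compMat_right, hempty, Set.image_empty, Set.empty_union,
      Set.ncard_image_of_injective, h₂.ncard_row hr]
    exact fun x y hxy => by simpa using hxy

variable [LinearOrder R]

lemma compMat_rotIso {r : CompRow s t R₁ R₂} {c : CompCol s t C₁ C C₂} :
    compMat (rot M) (rot M₂) (rot M₁) (fun q => rot (T (ofDual q))) (fun p => rot (S (ofDual p)))
      (CompRow.rotIso (toDual r)) (CompCol.rotIso (toDual c)) ↔ compMat M M₁ M₂ S T r c := by
  cases r <;> cases c <;> rfl

lemma alternates_rotIso {x y : CompCol s t C₁ C C₂}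
    (h : Alternates (compMat M M₁ M₂ S T : CompRow s t R₁ R₂ → _) x y) :
    Alternates (compMat (rot M) (rot M₂) (rot M₁) (fun q => rot (T (ofDual q)))
      (fun p => rot (S (ofDual p))) : CompRow (ofDual ⁻¹' t) (ofDual ⁻¹' s) R₂ᵒᵈ R₁ᵒᵈ → _)
      (CompCol.rotIso (toDual y)) (CompCol.rotIso (toDual x)) := by
  obtain ⟨r₁, r₂, r₃, r₄, h₁₂, h₂₃, h₃₄, h₁, h₂, h₃, h₄⟩ := h
  exact ⟨CompRow.rotIso (toDual r₄), CompRow.rotIso (toDual r₃), CompRow.rotIso (toDual r₂),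
    CompRow.rotIso (toDual r₁), CompRow.rotIso_lt_rotIso.2 h₃₄, CompRow.rotIso_lt_rotIso.2 h₂₃,
    CompRow.rotIso_lt_rotIso.2 h₁₂, compMat_rotIso.2 h₄, compMat_rotIso.2 h₃,
    compMat_rotIso.2 h₂, compMat_rotIso.2 h₁⟩

lemma exists_mem_inner (h : IsOpening M s a) (h₁ : IsOpening M₁ fi₁ m)
    (h₂ : IsOpening M₂ fi₂ (m + 1)) (hS : MatchesColumns M s fi₁ S) (c : CompCol s t C₁ C C₂) :
    ∃ r ∈ (CompRow.inner fi₁ fi₂ : Set (CompRow s t R₁ R₂)), compMat M M₁ M₂ S T r c := by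
  cases c with
  | left p hp x =>
    obtain ⟨i, hi, hix⟩ := h₁.exists_mem x
    exact ⟨.left p hp i, hi, rfl, hix⟩
  | outer c =>
    obtain ⟨p, hp, hpc⟩ := h.exists_mem c
    obtain ⟨i, hi⟩ := (hS hp).exists_right hpc
    exact ⟨.left p hp i, (hS hp).mem_right hi, hi⟩
  | right q hq x =>
    obtain ⟨i, hi, hix⟩ := h₂.exists_mem x
    exact ⟨.right q hq i, hi, rfl, hix⟩

lemma le_of_mem_inner (h : IsOpening M s a) (h₁ : IsOpening M₁ fi₁ m)
    (h₂ : IsOpening M₂ fi₂ (m + 1)) (hS : MatchesColumns M s fi₁ S)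
    (hT : MatchesColumns M t la₂ T) (hdisj : Disjoint fi₂ la₂) {r r' : CompRow s t R₁ R₂}
    {c : CompCol s t C₁ C C₂} (hr : r ∈ CompRow.inner fi₁ fi₂) (hrc : compMat M M₁ M₂ S T r c)
    (hr'c : compMat M M₁ M₂ S T r' c) : r ≤ r' := by
  cases c with
  | left p hp x =>
    cases r <;> simp only [compMat] at hrc
    cases r' <;> simp only [compMat] at hr'c
    obtain ⟨⟨rfl, hi⟩, rfl, hi'⟩ := And.intro hrc hr'c
    simpa [← not_lt, CompRow.lt_iff, CompRow.Lt] using h₁.le_of_mem hr hi hi'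
  | outer c =>
    obtain ⟨p, hp, i, rfl, hi⟩ := exists_eq_left_of_mem_inner hT hdisj hr hrc
    rcases eq_or_forall_left_lt h hS hT hp hi hr'c with rfl | hlt
    · exact le_rfl
    · exact (hlt i).le
  | right q hq x =>
    cases r <;> simp only [compMat] at hrc
    cases r' <;> simp only [compMat] at hr'c
    obtain ⟨⟨rfl, hi⟩, rfl, hi'⟩ := And.intro hrc hr'c
    simpa [← not_lt, CompRow.lt_iff, CompRow.Lt] using h₂.le_of_mem hr hi hi'

lemma lt_of_mem_inner_outer (h : IsOpening M s a) (hS : MatchesColumns M s fi₁ S)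
    (hT : MatchesColumns M t la₂ T) (hdisj : Disjoint fi₂ la₂) {r r₁ r₂ : CompRow s t R₁ R₂}
    {x : CompCol s t C₁ C C₂} {y : C} (hr : r ∈ CompRow.inner fi₁ fi₂) (hxy : x < .outer y)
    (hx : compMat M M₁ M₂ S T r x) (hy : compMat M M₁ M₂ S T r (.outer y)) (hr₁ : r < r₁)
    (h₁y : compMat M M₁ M₂ S T r₁ (.outer y)) (h₂x : compMat M M₁ M₂ S T r₂ x) : r₂ < r₁ := by
  obtain ⟨p, hp, i, rfl, hi⟩ := exists_eq_left_of_mem_inner hT hdisj hr hy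
  have hleft := (eq_or_forall_left_lt h hS hT hp hi h₁y).resolve_left hr₁.ne'
  cases x with
  | left p' hp' x =>
    obtain ⟨rfl, _⟩ := hx
    cases r₂ <;> simp only [compMat] at h₂x
    obtain ⟨rfl, _⟩ := h₂x
    exact hleft _
  | outer x => exact (hxy.ne (congrArg _ ((hS hp).left_unique hx hi))).elim
  | right => exact (CompCol.lt_iff.1 hxy).elim

lemma lt_of_mem_inner (h : IsOpening M s a) (h₁ : IsOpening M₁ fi₁ m)
    (h₂ : IsOpening M₂ fi₂ (m + 1)) (hS : MatchesColumns M s fi₁ S)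
    (hT : MatchesColumns M t la₂ T) (hdisj : Disjoint fi₂ la₂) {r r₁ r₂ : CompRow s t R₁ R₂}
    {x y : CompCol s t C₁ C C₂} (hr : r ∈ CompRow.inner fi₁ fi₂) (hxy : x < y)
    (hx : compMat M M₁ M₂ S T r x) (hy : compMat M M₁ M₂ S T r y) (hr₁ : r < r₁)
    (h₁y : compMat M M₁ M₂ S T r₁ y) (h₂x : compMat M M₁ M₂ S T r₂ x) : r₂ < r₁ := by
  have hlt := CompCol.lt_iff.1 hxy
  cases y with
  | outer y => exact lt_of_mem_inner_outer h hS hT hdisj hr hxy hx hy hr₁ h₁y h₂x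
  | left p hp y =>
    cases x <;> simp only [CompCol.Lt] at hlt
    cases r <;> simp only [compMat] at hx hy
    cases r₁ <;> simp only [compMat] at h₁y
    cases r₂ <;> simp only [compMat] at h₂x
    obtain ⟨rfl, hx⟩ := hx
    obtain ⟨rfl, hy⟩ := hy
    obtain ⟨rfl, h₁y⟩ := h₁y
    obtain ⟨rfl, h₂x⟩ := h₂x
    simp only [CompRow.lt_iff, CompRow.Lt, lt_self_iff_false, true_and, false_or] at hlt hr₁ ⊢
    exact h₁.lt_of_mem hr hlt hx hy hr₁ h₁y h₂x
  | right q hq y =>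
    cases r <;> simp only [compMat] at hy
    cases r₁ <;> simp only [compMat] at h₁y
    cases x with
    | left => exact hx.elim
    | outer x => exact (Set.disjoint_left.1 hdisj hr ((hT ‹_›).mem_right hx)).elim
    | right =>
      cases r₂ <;> simp only [compMat] at h₂x
      obtain ⟨rfl, hx⟩ := hx
      obtain ⟨rfl, hy⟩ := hy
      obtain ⟨rfl, h₁y⟩ := h₁y
      obtain ⟨rfl, h₂x⟩ := h₂x
      simp only [CompCol.Lt, CompRow.lt_iff, CompRow.Lt, lt_self_iff_false, true_and,
        false_or] at hlt hr₁ ⊢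
      exact h₂.lt_of_mem hr hlt hx hy hr₁ h₁y h₂x

lemma isOpening [Finite C₁] (h : IsOpening M s a) (h₁ : IsOpening M₁ fi₁ m)
    (h₂ : IsOpening M₂ fi₂ (m + 1)) (hS : MatchesColumns M s fi₁ S)
    (hT : MatchesColumns M t la₂ T) (hdisj : Disjoint fi₂ la₂) :
    IsOpening (compMat M M₁ M₂ S T : CompRow s t R₁ R₂ → CompCol s t C₁ C C₂ → Prop)
      (CompRow.inner fi₁ fi₂) (m + 1) where
  exists_mem := exists_mem_inner h h₁ h₂ hS
  le_of_mem := le_of_mem_inner h h₁ h₂ hS hT hdisj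
  ncard_row := ncard_row_of_mem_inner h₁ h₂ hS hT hdisj
  lt_of_mem := lt_of_mem_inner h h₁ h₂ hS hT hdisj

lemma isClosing [Finite C₂] (h : IsClosing M t a) (h₁ : IsClosing M₁ la₁ (m + 1))
    (h₂ : IsClosing M₂ la₂ m) (hS : MatchesColumns M s fi₁ S)
    (hT : MatchesColumns M t la₂ T) (hdisj : Disjoint fi₁ la₁) :
    IsClosing (compMat M M₁ M₂ S T : CompRow s t R₁ R₂ → CompCol s t C₁ C C₂ → Prop)
      (CompRow.inner la₁ la₂) (m + 1) := by
  have hopen := (isOpening h h₂ h₁ hT.rot hS.rot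
    (hdisj.symm.preimage _)).comap CompRow.rotIso CompCol.rotIso
  rw [IsClosing]
  convert hopen using 1
  · rfl
  · ext r c
    exact compMat_rotIso.symm
  · ext (_ | _ | _) <;> rfl

lemma not_alternates_left (hM₁ : AlternationFree M₁) (h : IsOpening M s a)
    (hS : MatchesColumns M s fi₁ S) (hT : MatchesColumns M t la₂ T) {p : R} {hp : p ∈ s} {x : C₁}
    {y : CompCol s t C₁ C C₂} (hxy : .left p hp x < y) :
    ¬ Alternates (compMat M M₁ M₂ S T : CompRow s t R₁ R₂ → _) (.left p hp x) y := by
  intro halt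
  cases y with
  | left p' hp' y =>
    obtain ⟨rfl, hxy'⟩ := eq_and_alternates_of_left halt
    simp only [CompCol.lt_iff, CompCol.Lt, lt_self_iff_false, true_and, false_or] at hxy
    exact hM₁ _ _ hxy hxy'
  | outer y =>
    obtain ⟨r₁, r₂, r₃, r₄, h₁₂, h₂₃, h₃₄, h₁, h₂, h₃, h₄⟩ := halt
    cases r₂ <;> simp only [compMat] at h₂
    cases r₄ <;> simp only [compMat] at h₄
    obtain ⟨rfl, -⟩ := h₂
    obtain ⟨rfl, -⟩ := h₄
    -- Both entries in the outer column lie above a row of the copy at `p`; the later one is in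
    -- this copy, where the outer column has only one entry.
    rw [CompRow.lt_iff] at h₂₃ h₃₄
    cases r₃ with
    | outer r => exact (h₂₃.trans_lt h₃₄).false
    | right q => exact (h₂₃.trans_lt h₃₄).false
    | left p' hp' i =>
      obtain rfl : p = p' := by simp only [CompRow.Lt] at h₂₃ h₃₄; grind
      rcases eq_or_forall_left_lt h hS hT hp h₃ h₁ with rfl | hlt
      · exact (h₁₂.trans (CompRow.lt_iff.2 h₂₃)).false
      · exact (h₁₂.trans (hlt _)).false
  | right q hq y =>
    obtain ⟨r₁, r₂, r₃, r₄, h₁₂, h₂₃, -, h₁, h₂, h₃, -⟩ := halt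
    cases r₁ <;> simp only [compMat] at h₁
    cases r₂ <;> simp only [compMat] at h₂
    cases r₃ <;> simp only [compMat] at h₃
    obtain ⟨rfl, -⟩ := h₁
    obtain ⟨rfl, -⟩ := h₂
    obtain ⟨rfl, -⟩ := h₃
    rw [CompRow.lt_iff] at h₁₂ h₂₃
    exact (h₁₂.trans_le h₂₃).false

lemma not_alternates_right (hM₂ : AlternationFree M₂) (h : IsClosing M t a)
    (hS : MatchesColumns M s fi₁ S) (hT : MatchesColumns M t la₂ T) {q : R} {hq : q ∈ t} {y : C₂}
    {x : CompCol s t C₁ C C₂} (hxy : x < .right q hq y) :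
    ¬ Alternates (compMat M M₁ M₂ S T : CompRow s t R₁ R₂ → _) x (.right q hq y) := fun halt =>
  not_alternates_left hM₂.rot h hT.rot hS.rot (CompCol.rotIso_lt_rotIso.2 hxy)
    (alternates_rotIso halt)

lemma not_alternates_outer (hM : AlternationFree M) (h : IsOpening M s a) (h' : IsClosing M t b)
    (hdisj : Disjoint s t) (hS : MatchesColumns M s fi₁ S) (hT : MatchesColumns M t la₂ T)
    {x y : C} (hxy : x < y) :
    ¬ Alternates (compMat M M₁ M₂ S T : CompRow s t R₁ R₂ → CompCol s t C₁ C C₂ → Prop)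
      (.outer x) (.outer y) := by
  rintro ⟨r₁, r₂, r₃, r₄, h₁₂, h₂₃, h₃₄, h₁, h₂, h₃, h₄⟩
  have hs {p : R} (hp : p ∈ s) (hx : M p x) (hy : M p y) (hle : r₂.proj ≤ p) : False :=
    false_of_proj_le h hS hT hxy h₁₂ h₂₃ h₃₄ h₁ h₂ h₃ h₄ hp (Set.disjoint_left.1 hdisj hp) hx hy
      hle
  have ht {q : R} (hq : q ∈ t) (hx : M q x) (hy : M q y) (hle : q ≤ r₃.proj) : False := by
    refine false_of_proj_le (M₁ := rot M₂) (M₂ := rot M₁) (p := toDual q) h' hT.rot hS.rot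
      (toDual_lt_toDual.2 hxy) (CompRow.rotIso_lt_rotIso.2 h₃₄) (CompRow.rotIso_lt_rotIso.2 h₂₃)
      (CompRow.rotIso_lt_rotIso.2 h₁₂) (compMat_rotIso.2 h₄) (compMat_rotIso.2 h₃)
      (compMat_rotIso.2 h₂) (compMat_rotIso.2 h₁) hq (Set.disjoint_right.1 hdisj hq) hy hx ?_
    cases r₃ <;> exact hle
  have hM₁ := of_outer hS hT h₁
  have hM₂ := of_outer hS hT h₂
  have hM₃ := of_outer hS hT h₃
  have hM₄ := of_outer hS hT h₄
  have hle₁₂ := CompRow.proj_le_proj h₁₂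
  have hle₂₃ := CompRow.proj_le_proj h₂₃
  have hle₃₄ := CompRow.proj_le_proj h₃₄
  -- If no two consecutive rows belong to the same outer row, the outer matrix alternates.
  rcases hle₁₂.lt_or_eq with hlt₁₂ | heq
  · rcases hle₂₃.lt_or_eq with hlt₂₃ | heq
    · rcases hle₃₄.lt_or_eq with hlt₃₄ | heq
      · exact hM x y hxy ⟨_, _, _, _, hlt₁₂, hlt₂₃, hlt₃₄, hM₁, hM₂, hM₃, hM₄⟩
      · exact (CompRow.proj_mem_or_mem h₃₄ heq).elim (hs · (heq ▸ hM₄) hM₃ hle₂₃)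
          (ht · (heq ▸ hM₄) hM₃ le_rfl)
    · exact (CompRow.proj_mem_or_mem h₂₃ heq).elim (hs · hM₂ (heq ▸ hM₃) le_rfl)
        (ht · hM₂ (heq ▸ hM₃) hle₂₃)
  · exact (CompRow.proj_mem_or_mem h₁₂ heq).elim (hs · (heq ▸ hM₂) hM₁ heq.ge)
      (ht · (heq ▸ hM₂) hM₁ (hle₁₂.trans hle₂₃))

lemma alternationFree (hM : AlternationFree M) (hM₁ : AlternationFree M₁)
    (hM₂ : AlternationFree M₂) (h : IsOpening M s a) (h' : IsClosing M t b) (hdisj : Disjoint s t)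
    (hS : MatchesColumns M s fi₁ S) (hT : MatchesColumns M t la₂ T) :
    AlternationFree (compMat M M₁ M₂ S T : CompRow s t R₁ R₂ → CompCol s t C₁ C C₂ → Prop) := by
  intro x y hxy
  cases x with
  | left p hp x => exact not_alternates_left hM₁ h hS hT hxy
  | outer x =>
    cases y with
    | left => exact (CompCol.lt_iff.1 hxy).elim
    | outer y => exact not_alternates_outer hM h h' hdisj hS hT (CompCol.lt_iff.1 hxy)
    | right q hq y => exact not_alternates_right hM₂ h' hS hT hxy
  | right =>
    cases y with
    | left => exact (CompCol.lt_iff.1 hxy).elim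
    | outer => exact (CompCol.lt_iff.1 hxy).elim
    | right q hq y => exact not_alternates_right hM₂ h' hS hT hxy

lemma isFramed [Finite C₁] [Finite C₂] {m₁ m₂ : ℕ} (h : IsFramed M s t a b)
    (h₁ : IsFramed M₁ fi₁ la₁ m₁ (m₂ + 1)) (h₂ : IsFramed M₂ fi₂ la₂ (m₁ + 1) m₂)
    (hS : MatchesColumns M s fi₁ S) (hT : MatchesColumns M t la₂ T) :
    IsFramed (compMat M M₁ M₂ S T : CompRow s t R₁ R₂ → CompCol s t C₁ C C₂ → Prop)
      (CompRow.inner fi₁ fi₂) (CompRow.inner la₁ la₂) (m₁ + 1) (m₂ + 1) where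
  alternationFree := alternationFree h.alternationFree h₁.alternationFree h₂.alternationFree
    h.isOpening h.isClosing h.disjoint hS hT
  disjoint := CompRow.disjoint_inner h₁.disjoint h₂.disjoint
  isOpening := isOpening h.isOpening h₁.isOpening h₂.isOpening hS hT h₂.disjoint
  isClosing := isClosing h.isClosing h₁.isClosing h₂.isClosing hS hT h₁.disjoint

end CompMat

lemma IsClosing.card_cols {R C : Type*} [PartialOrder R] [LT C] [Finite R] [Finite C]
    {M : R → C → Prop} {s : Set R} {m : ℕ} (h : IsClosing M s m) :
    Nat.card C = s.ncard * m :=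
  have : Finite Rᵒᵈ := ‹Finite R›
  have : Finite Cᵒᵈ := ‹Finite C›
  IsOpening.card_cols (M := rot M) h

lemma IsClosing.ncard_row {R C : Type*} [Preorder R] [LT C] {M : R → C → Prop} {s : Set R} {m : ℕ}
    (h : IsClosing M s m) {r : R} (hr : r ∈ s) : {c | M r c}.ncard = m :=
  IsOpening.ncard_row (M := rot M) h (r := toDual r) hr

/-! ## The double recursion -/

/-- The framed matrices of stage `d` of the construction: every column has at least `2 * d + 2`
entries, there are at most `2 ^ (d + 1)` times as many rows as framing rows, and the number of
framing rows grows with `m₁ + m₂` no faster than the inverse of `alphaHier (d + 3)`. -/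
structure IsDenselyFramed {R C : Type*} [Preorder R] [LT C] (M : R → C → Prop) (fi la : Set R)
    (d m₁ m₂ : ℕ) : Prop extends IsFramed M fi la m₁ m₂ where
  le_ncard_column (c : C) : 2 * d + 2 ≤ {r | M r c}.ncard
  card_rows_le : Nat.card R + 2 ^ (d + 1) ≤ 2 ^ (d + 1) * (fi.ncard + la.ncard) + 1
  ncard_add_ncard_le : 2 * (fi.ncard + la.ncard) + 6 ≤ alphaInv (d + 3) (m₁ + m₂ + 5)

namespace IsDenselyFramed

variable {R C : Type*} [PartialOrder R] [LT C] {M : R → C → Prop} {fi la : Set R} {d m₁ m₂ : ℕ}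

lemma one_le_ncard_add_ncard (h : IsDenselyFramed M fi la d m₁ m₂) :
    1 ≤ fi.ncard + la.ncard := by
  have hpow : 2 ≤ 2 ^ (d + 1) := Nat.le_self_pow (by lia) 2
  have hle := h.card_rows_le
  by_contra! hlt
  rw [Nat.lt_one_iff.1 hlt] at hle
  lia

lemma ncard_mul_eq_ncard_mul [Finite R] [Finite C] (h : IsDenselyFramed M fi la d m₁ m₂) :
    fi.ncard * m₁ = la.ncard * m₂ :=
  h.isOpening.card_cols.symm.trans h.isClosing.card_cols

lemma ncard_first_pos [Finite R] [Finite C] (h : IsDenselyFramed M fi la d m₁ m₂) (hm₂ : 0 < m₂) :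
    0 < fi.ncard := by
  by_contra! h0
  have hmul := h.ncard_mul_eq_ncard_mul
  have hone := h.one_le_ncard_add_ncard
  rw [Nat.le_zero.1 h0, zero_mul, eq_comm, mul_eq_zero] at hmul
  lia

lemma ncard_last_pos [Finite R] [Finite C] (h : IsDenselyFramed M fi la d m₁ m₂) (hm₁ : 0 < m₁) :
    0 < la.ncard := by
  by_contra! h0
  have hmul := h.ncard_mul_eq_ncard_mul
  have hone := h.one_le_ncard_add_ncard
  rw [Nat.le_zero.1 h0, zero_mul, mul_eq_zero] at hmul
  lia

lemma of_isEmpty_cols {R C : Type*} [Preorder R] [LT C] [IsEmpty C] {M : R → C → Prop}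
    {fi la : Set R} {d m₁ m₂ : ℕ} (hR : Nat.card R = 1) (hdisj : Disjoint fi la)
    (hcard : fi.ncard + la.ncard = 1) (hfi : fi = ∅ ∨ m₁ = 0) (hla : la = ∅ ∨ m₂ = 0) :
    IsDenselyFramed M fi la d m₁ m₂ where
  alternationFree x := isEmptyElim x
  disjoint := hdisj
  isOpening := .of_isEmpty hfi
  isClosing :=
    have : IsEmpty Cᵒᵈ := ‹IsEmpty C›
    IsOpening.of_isEmpty (hla.imp_left fun h => by rw [h, Set.preimage_empty])
  le_ncard_column := isEmptyElim
  card_rows_le := by rw [hR, hcard]; lia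
  ncard_add_ncard_le := by
    rw [hcard]
    have hpow : 2 ^ 4 ≤ 2 ^ (m₁ + m₂ + 4) := Nat.pow_le_pow_right two_pos (by lia)
    have hlt : 2 ^ (m₁ + m₂ + 4) < alphaInv (d + 3) (m₁ + m₂ + 5) := two_pow_lt_alphaInv _ _
    lia

end IsDenselyFramed

/-- The matrix with rows `A` followed by `B` and one column for each pair in `A × B`, whose two
entries are in the rows given by the components of the pair. -/
def pairMat (A B : Type*) : A ⊕ₗ B → A ×ₗ B → Prop :=
  fun r c => r = Sum.inlₗ (ofLex c).1 ∨ r = Sum.inrₗ (ofLex c).2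

section PairMat

variable {A B : Type*}

lemma setOf_pairMat (c : A ×ₗ B) :
    {r | pairMat A B r c} = {Sum.inlₗ (ofLex c).1, Sum.inrₗ (ofLex c).2} := rfl

lemma ncard_range_inlₗ : (Set.range (Sum.inlₗ : A → A ⊕ₗ B)).ncard = Nat.card A :=
  Set.ncard_range_of_injective fun _ _ h => Sum.inl.inj h

lemma ncard_range_inrₗ : (Set.range (Sum.inrₗ : B → A ⊕ₗ B)).ncard = Nat.card B :=
  Set.ncard_range_of_injective fun _ _ h => Sum.inr.inj h

variable [LinearOrder A] [LinearOrder B]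

lemma alternationFree_pairMat : AlternationFree (pairMat A B) := by
  rintro x y hxy ⟨r₁, r₂, r₃, r₄, h₁₂, h₂₃, h₃₄, h₁, h₂, h₃, h₄⟩
  rw [Prod.Lex.lt_iff] at hxy
  rcases h₁ with rfl | rfl <;> rcases h₂ with rfl | rfl <;> rcases h₃ with rfl | rfl <;>
    rcases h₄ with rfl | rfl <;> simp [Sum.inlₗ, Sum.inrₗ] at h₁₂ h₂₃ h₃₄ <;> grind

lemma isOpening_pairMat : IsOpening (pairMat A B) (Set.range Sum.inlₗ) (Nat.card B) where
  exists_mem c := ⟨_, ⟨_, rfl⟩, .inl rfl⟩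
  le_of_mem := by
    rintro _ r' c ⟨a, rfl⟩ (h | h) (rfl | rfl) <;> simp_all [Sum.inlₗ, Sum.inrₗ]
  ncard_row := by
    rintro _ ⟨a, rfl⟩
    have hrow : {c | pairMat A B (Sum.inlₗ a) c} = Set.range fun b => toLex (a, b) := by
      ext c
      simp [pairMat, Sum.inlₗ, Sum.inrₗ, ← ofLex_inj, Prod.ext_iff]
    rw [hrow, Set.ncard_range_of_injective fun b b' h => by simpa using h]
  lt_of_mem := by
    rintro _ r₁ r₂ x y ⟨a, rfl⟩ hxy hx hy hr₁ h₁ h₂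
    rw [Prod.Lex.lt_iff] at hxy
    rcases hx with hx | hx <;> rcases hy with hy | hy <;> rcases h₁ with rfl | rfl <;>
      rcases h₂ with rfl | rfl <;> simp_all [Sum.inlₗ, Sum.inrₗ]

lemma isClosing_pairMat : IsClosing (pairMat A B) (Set.range Sum.inrₗ) (Nat.card A) where
  exists_mem c := ⟨toDual (Sum.inrₗ (ofLex (ofDual c)).2), ⟨_, rfl⟩, .inr rfl⟩
  le_of_mem := by
    rintro r r' c ⟨b, hb⟩ h h'
    obtain ⟨r, rfl⟩ := toDual.surjective r
    obtain ⟨r', rfl⟩ := toDual.surjective r'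
    rcases h with h | h <;> rcases h' with h' | h' <;> simp_all [Sum.inlₗ, Sum.inrₗ]
  ncard_row := by
    rintro r ⟨b, hb⟩
    obtain rfl : r = toDual (Sum.inrₗ b) := hb.symm
    have hrow : {c | pairMat A B (Sum.inrₗ b) c} = Set.range fun a => toLex (a, b) := by
      ext c
      simp [pairMat, Sum.inlₗ, Sum.inrₗ, ← ofLex_inj, Prod.ext_iff, eq_comm]
    have hcard : {c | pairMat A B (Sum.inrₗ b) c}.ncard = Nat.card A := by
      rw [hrow, Set.ncard_range_of_injective fun a a' h => by simpa using h]
    exact hcard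
  lt_of_mem := by
    rintro r r₁ r₂ x y ⟨b, hb⟩ hxy hx hy hr₁ h₁ h₂
    obtain ⟨r₁, rfl⟩ := toDual.surjective r₁
    obtain ⟨r₂, rfl⟩ := toDual.surjective r₂
    obtain rfl : r = toDual (Sum.inrₗ b) := hb.symm
    obtain ⟨x, rfl⟩ := toDual.surjective x
    obtain ⟨y, rfl⟩ := toDual.surjective y
    rw [toDual_lt_toDual, Prod.Lex.lt_iff] at hxy
    rcases hx with hx | hx <;> rcases hy with hy | hy <;> rcases h₁ with rfl | rfl <;>
      rcases h₂ with rfl | rfl <;> simp_all [Sum.inlₗ, Sum.inrₗ]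

lemma isDenselyFramed_pairMat [Finite A] [Finite B] (h : 0 < Nat.card A + Nat.card B) :
    IsDenselyFramed (pairMat A B) (Set.range Sum.inlₗ) (Set.range Sum.inrₗ) 0 (Nat.card B)
      (Nat.card A) where
  alternationFree := alternationFree_pairMat
  disjoint := by simp [Set.disjoint_left, Sum.inlₗ, Sum.inrₗ]
  isOpening := isOpening_pairMat
  isClosing := isClosing_pairMat
  le_ncard_column c := by
    rw [setOf_pairMat, Set.ncard_pair (by simp [Sum.inlₗ, Sum.inrₗ])]
  card_rows_le := by
    rw [ncard_range_inlₗ, ncard_range_inrₗ, Nat.card_congr (ofLex : A ⊕ₗ B ≃ A ⊕ B), Nat.card_sum]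
    lia
  ncard_add_ncard_le := by
    rw [ncard_range_inlₗ, ncard_range_inrₗ, add_comm (Nat.card A)]
    generalize Nat.card B + Nat.card A = m
    have hm : m < 2 ^ m := Nat.lt_two_pow_self
    calc 2 * m + 6 ≤ 2 ^ m * 2 ^ 4 := by lia
      _ = 2 ^ (m + 4) := (pow_add 2 m 4).symm
      _ ≤ alphaInv 3 (m + 5) := (two_pow_lt_alphaInv 1 (m + 4)).le

end PairMat

/-- There is a finite framed matrix of stage `d` with `m₁` entries in the first and `m₂` entries in
the last rows. -/
def ExistsDenselyFramed (d m₁ m₂ : ℕ) : Prop :=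
  ∃ (R C : Type) (_ : LinearOrder R) (_ : LinearOrder C) (_ : Finite R) (_ : Finite C)
    (M : R → C → Prop) (fi la : Set R), IsDenselyFramed M fi la d m₁ m₂

lemma existsDenselyFramed_of_eq_zero {d m₁ m₂ : ℕ} (h : m₁ = 0 ∨ m₂ = 0) :
    ExistsDenselyFramed d m₁ m₂ := by
  rcases h with h | h
  · exact ⟨Unit, Empty, inferInstance, inferInstance, inferInstance, inferInstance,
      fun _ _ => False, .univ, ∅, .of_isEmpty_cols (by simp) (Set.disjoint_empty _) (by simp)
        (.inr h) (.inl rfl)⟩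
  · exact ⟨Unit, Empty, inferInstance, inferInstance, inferInstance, inferInstance,
      fun _ _ => False, ∅, .univ, .of_isEmpty_cols (by simp) (Set.empty_disjoint _) (by simp)
        (.inl rfl) (.inr h)⟩

lemma existsDenselyFramed_zero (m₁ m₂ : ℕ) : ExistsDenselyFramed 0 m₁ m₂ := by
  rcases m₁.eq_zero_or_pos with h | h
  · exact existsDenselyFramed_of_eq_zero (.inl h)
  · have hframed := isDenselyFramed_pairMat (A := Fin m₂) (B := Fin m₁) (by simp [h])
    rw [Nat.card_fin, Nat.card_fin] at hframed
    exact ⟨Fin m₂ ⊕ₗ Fin m₁, Fin m₂ ×ₗ Fin m₁, inferInstance, inferInstance, inferInstance,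
      inferInstance, _, _, _, hframed⟩

lemma card_rows_composite_le {k g₁ g₂ x x₁ x₂ w₁ w₂ : ℕ} (hk : 2 ≤ k) (hg₁ : 0 < g₁) (hg₂ : 0 < g₂)
    (hx : x + k ≤ k * (g₁ + g₂) + 1) (hx₁ : x₁ + 2 * k ≤ 2 * k * w₁ + 1)
    (hx₂ : x₂ + 2 * k ≤ 2 * k * w₂ + 1) :
    x + (g₁ * x₁ + g₂ * x₂) + 2 * k ≤ 2 * k * (g₁ * w₁ + g₂ * w₂) + 1 := by
  have h₁ : g₁ * (x₁ + 2 * k) ≤ g₁ * (2 * k * w₁ + 1) := Nat.mul_le_mul_left _ hx₁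
  have h₂ : g₂ * (x₂ + 2 * k) ≤ g₂ * (2 * k * w₂ + 1) := Nat.mul_le_mul_left _ hx₂
  have hkg : k + (g₁ + g₂) ≤ k * (g₁ + g₂) := by
    rw [mul_comm, add_comm]
    exact Nat.add_le_mul (by lia) hk
  linarith

lemma two_mul_ncard_composite_add_six_le {k s g₁ g₂ x₁ x₂ y₁ y₂ v : ℕ}
    (hv : v ≤ x₁ + y₁ + (x₂ + y₂)) (hg : 2 * (g₁ + g₂) + 6 ≤ alphaInv (k + 3) (v + 5))
    (h₁ : 2 * (x₁ + y₁) + 6 ≤ alphaInv (k + 4) (s + 1))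
    (h₂ : 2 * (x₂ + y₂) + 6 ≤ alphaInv (k + 4) (s + 1)) :
    2 * (g₁ * x₁ + g₂ * x₂ + (g₁ * y₁ + g₂ * y₂)) + 6 ≤ alphaInv (k + 4) (s + 2) := by
  obtain ⟨u, hu₁, hu₂, hu⟩ : ∃ u, x₁ + y₁ ≤ u ∧ x₂ + y₂ ≤ u ∧
      2 * u + 6 ≤ alphaInv (k + 4) (s + 1) := by
    rcases le_total (x₁ + y₁) (x₂ + y₂) with hle | hle
    · exact ⟨_, hle, le_rfl, h₂⟩
    · exact ⟨_, le_rfl, hle, h₁⟩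
  calc 2 * (g₁ * x₁ + g₂ * x₂ + (g₁ * y₁ + g₂ * y₂)) + 6
      = 2 * (g₁ * (x₁ + y₁) + g₂ * (x₂ + y₂)) + 6 := by ring
    _ ≤ 2 * (g₁ * u + g₂ * u) + 6 := by gcongr
    _ = 2 * ((g₁ + g₂) * u) + 6 := by ring
    _ ≤ alphaInv (k + 4) (s + 2) := two_mul_mul_add_six_le_alphaInv (by lia) hg hu

lemma IsDenselyFramed.compMat {R C R₁ C₁ R₂ C₂ : Type*} [LinearOrder R] [LinearOrder C]
    [LinearOrder R₁] [LinearOrder C₁] [LinearOrder R₂] [LinearOrder C₂] [Finite R] [Finite C]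
    [Finite R₁] [Finite C₁] [Finite R₂] [Finite C₂] {M : R → C → Prop} {M₁ : R₁ → C₁ → Prop}
    {M₂ : R₂ → C₂ → Prop} {s t : Set R} {fi₁ la₁ : Set R₁} {fi₂ la₂ : Set R₂} {d m₁ m₂ : ℕ}
    {S : R → C → R₁ → Prop} {T : R → C → R₂ → Prop}
    (h : IsDenselyFramed M s t d fi₁.ncard la₂.ncard)
    (h₁ : IsDenselyFramed M₁ fi₁ la₁ (d + 1) m₁ (m₂ + 1))
    (h₂ : IsDenselyFramed M₂ fi₂ la₂ (d + 1) (m₁ + 1) m₂)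
    (hS : MatchesColumns M s fi₁ S) (hT : MatchesColumns M t la₂ T) :
    IsDenselyFramed (compMat M M₁ M₂ S T : CompRow s t R₁ R₂ → CompCol s t C₁ C C₂ → Prop)
      (CompRow.inner fi₁ fi₂) (CompRow.inner la₁ la₂) (d + 1) (m₁ + 1) (m₂ + 1) where
  toIsFramed := CompMat.isFramed h.toIsFramed h₁.toIsFramed h₂.toIsFramed hS hT
  le_ncard_column := CompMat.le_ncard_column h.isOpening h.isClosing hS hT h.le_ncard_column
    h₁.le_ncard_column h₂.le_ncard_column
  card_rows_le := by
    have hs := h.ncard_first_pos (h₂.ncard_last_pos m₁.succ_pos)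
    have ht := h.ncard_last_pos (h₁.ncard_first_pos m₂.succ_pos)
    have hle := card_rows_composite_le (Nat.le_self_pow (by lia) 2) hs ht h.card_rows_le
      (pow_succ' 2 (d + 1) ▸ h₁.card_rows_le) (pow_succ' 2 (d + 1) ▸ h₂.card_rows_le)
    rw [CompRow.card_eq, CompRow.ncard_inner, CompRow.ncard_inner, pow_succ']
    linarith
  ncard_add_ncard_le := by
    have hle₁ := h₁.ncard_add_ncard_le
    have hle₂ := h₂.ncard_add_ncard_le
    rw [← add_assoc, add_right_comm] at hle₁
    rw [add_right_comm m₁ 1, add_right_comm] at hle₂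
    rw [CompRow.ncard_inner, CompRow.ncard_inner,
      show m₁ + 1 + (m₂ + 1) + 5 = m₁ + m₂ + 5 + 2 by ring]
    exact two_mul_ncard_composite_add_six_le (by lia) h.ncard_add_ncard_le hle₁ hle₂

lemma existsDenselyFramed_succ {d m₁ m₂ : ℕ} (h : ∀ a b, ExistsDenselyFramed d a b)
    (h₁ : ExistsDenselyFramed (d + 1) m₁ (m₂ + 1))
    (h₂ : ExistsDenselyFramed (d + 1) (m₁ + 1) m₂) :
    ExistsDenselyFramed (d + 1) (m₁ + 1) (m₂ + 1) := by
  obtain ⟨R₁, C₁, _, _, _, _, M₁, fi₁, la₁, h₁⟩ := h₁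
  obtain ⟨R₂, C₂, _, _, _, _, M₂, fi₂, la₂, h₂⟩ := h₂
  obtain ⟨R, C, _, _, _, _, M, s, t, h⟩ := h fi₁.ncard la₂.ncard
  obtain ⟨S, hS⟩ := exists_matchesColumns fun r hr => h.isOpening.ncard_row hr
  obtain ⟨T, hT⟩ := exists_matchesColumns fun q hq => h.isClosing.ncard_row hq
  exact ⟨CompRow s t R₁ R₂, CompCol s t C₁ C C₂, inferInstance, inferInstance, inferInstance,
    inferInstance, _, _, _, h.compMat h₁ h₂ hS hT⟩

lemma existsDenselyFramed (d m₁ m₂ : ℕ) : ExistsDenselyFramed d m₁ m₂ := by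
  induction d generalizing m₁ m₂ with
  | zero => exact existsDenselyFramed_zero m₁ m₂
  | succ d ihd =>
    induction m₁ generalizing m₂ with
    | zero => exact existsDenselyFramed_of_eq_zero (.inl rfl)
    | succ m₁ ih₁ =>
      induction m₂ with
      | zero => exact existsDenselyFramed_of_eq_zero (.inr rfl)
      | succ m₂ ih₂ => exact existsDenselyFramed_succ ihd (ih₁ _) ih₂

lemma exists_alternationFree (d : ℕ) :
    ∃ (R C : Type) (_ : LinearOrder R) (_ : LinearOrder C) (_ : Finite R) (_ : Finite C)
      (M : R → C → Prop), AlternationFree M ∧ (∀ c, 2 * (d + 1) ≤ {r | M r c}.ncard) ∧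
        Nat.card R ≤ Nat.card C ∧ 0 < Nat.card C ∧
        Nat.card C * (d + 1) ≤ alphaInv (d + 5) 4 := by
  obtain ⟨R, C, _, _, _, _, M, fi, la, h⟩ := existsDenselyFramed d (2 ^ (d + 2)) (2 ^ (d + 2))
  have hpos : 0 < 2 ^ (d + 2) := by positivity
  have hC : Nat.card C = fi.ncard * 2 ^ (d + 2) := h.isOpening.card_cols
  have heq : fi.ncard = la.ncard := Nat.eq_of_mul_eq_mul_right hpos h.ncard_mul_eq_ncard_mul
  refine ⟨R, C, inferInstance, inferInstance, inferInstance, inferInstance, M, h.alternationFree,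
    h.le_ncard_column, ?_, ?_, ?_⟩
  · have hR := h.card_rows_le
    have hpow : 1 ≤ 2 ^ (d + 1) := Nat.one_le_two_pow
    rw [← heq, ← two_mul, mul_left_comm, ← mul_assoc, ← pow_succ', mul_comm, ← hC] at hR
    lia
  · exact hC ▸ Nat.mul_pos (h.ncard_first_pos hpos) hpos
  · have hsize := h.ncard_add_ncard_le
    rw [← two_mul, ← pow_succ'] at hsize
    exact hC ▸ mul_two_pow_mul_le_alphaInv (by lia)

/-- The block diagonal matrix with one copy of `M` for each element of `ι`. -/
def blockDiag (ι : Type*) {R C : Type*} (M : R → C → Prop) : ι ×ₗ R → ι ×ₗ C → Prop :=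
  fun r c => (ofLex r).1 = (ofLex c).1 ∧ M (ofLex r).2 (ofLex c).2

section BlockDiag

variable {ι R C : Type*} {M : R → C → Prop}

lemma ncard_column_blockDiag (c : ι ×ₗ C) :
    {r | blockDiag ι M r c}.ncard = {r | M r (ofLex c).2}.ncard := by
  have hcol : {r | blockDiag ι M r c} =
      (fun r => toLex ((ofLex c).1, r)) '' {r | M r (ofLex c).2} := by
    ext r
    simp [blockDiag, ← ofLex_inj, Prod.ext_iff, and_comm, eq_comm]
  rw [hcol, Set.ncard_image_of_injective _ fun r r' h => by simpa using h]

lemma AlternationFree.blockDiag [PartialOrder ι] [LT R] [LT C] (h : AlternationFree M) :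
    AlternationFree (blockDiag ι M) := by
  rintro x y hxy ⟨r₁, r₂, r₃, r₄, h₁₂, h₂₃, h₃₄, ⟨e₁, h₁⟩, ⟨e₂, h₂⟩, ⟨e₃, h₃⟩, ⟨e₄, h₄⟩⟩
  rw [Prod.Lex.lt_iff] at hxy h₁₂ h₂₃ h₃₄
  have hblock : (ofLex x).1 = (ofLex y).1 := by grind
  have halt : Alternates M (ofLex x).2 (ofLex y).2 := by
    refine ⟨_, _, _, _, ?_, ?_, ?_, h₁, h₂, h₃, h₄⟩ <;> grind
  exact h _ _ (by grind) halt

end BlockDiag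

lemma mul_le_card_entries {R C : Type*} [Finite R] [Finite C] {M : R → C → Prop} {μ : ℕ}
    (hμ : ∀ c, μ ≤ {r | M r c}.ncard) : Nat.card C * μ ≤ Nat.card {p : R × C // M p.1 p.2} := by
  have := Fintype.ofFinite C
  let e : {p : R × C // M p.1 p.2} ≃ Σ c, {r | M r c} :=
    { toFun p := ⟨p.1.2, p.1.1, p.2⟩
      invFun p := ⟨(p.2.1, p.1), p.2.2⟩ }
  calc Nat.card C * μ = ∑ _ : C, μ := by simp
    _ ≤ ∑ c, {r | M r c}.ncard := Finset.sum_le_sum fun c _ => hμ c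
    _ = Nat.card {p : R × C // M p.1 p.2} := by
      rw [Nat.card_congr e, Nat.card_sigma]
      rfl

lemma nonempty_orderEmbedding_fin {α : Type*} [LinearOrder α] [Finite α] {n : ℕ}
    (h : Nat.card α ≤ n) : Nonempty (α ↪o Fin n) := by
  have := Fintype.ofFinite α
  exact ⟨(Fintype.orderIsoFinOfCardEq α Nat.card_eq_fintype_card.symm).symm.toOrderEmbedding.trans
    (Fin.castLEOrderEmb h)⟩

lemma AlternationFree.exists_matrix {R C : Type*} [LinearOrder R] [LinearOrder C] [Finite R]
    [Finite C] {M : R → C → Prop} (h : AlternationFree M) {n μ : ℕ} (hR : Nat.card R ≤ n)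
    (hC : Nat.card C ≤ n) (hμ : ∀ c, μ ≤ {r | M r c}.ncard) :
    ∃ B : Fin n → Fin n → Bool, ¬ MatContains B (DS 4) ∧ Nat.card C * μ ≤ matOnes B := by
  classical
  obtain ⟨e⟩ := nonempty_orderEmbedding_fin hR
  obtain ⟨f⟩ := nonempty_orderEmbedding_fin hC
  refine ⟨fun i j => decide (∃ r c, e r = i ∧ f c = j ∧ M r c), ?_, ?_⟩
  · rw [matContains_DS_four_iff]
    simp only [Alternates, decide_eq_true_eq]
    rintro ⟨_, _, hxy, _, _, _, _, h₁₂, h₂₃, h₃₄, ⟨r₁, y, rfl, rfl, h₁⟩, ⟨r₂, x, rfl, rfl, h₂⟩,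
      ⟨r₃, y', rfl, hy, h₃⟩, ⟨r₄, x', rfl, hx, h₄⟩⟩
    obtain rfl := f.injective hy
    obtain rfl := f.injective hx
    rw [OrderEmbedding.lt_iff_lt] at hxy h₁₂ h₂₃ h₃₄
    exact h _ _ hxy ⟨_, _, _, _, h₁₂, h₂₃, h₃₄, h₁, h₂, h₃, h₄⟩
  · refine (mul_le_card_entries hμ).trans (Nat.card_le_card_of_injective
      (fun p => ⟨(e p.1.1, f p.1.2), by simpa using p.2⟩) fun p q hpq => ?_)
    simpa [Subtype.ext_iff, Prod.ext_iff] using hpq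

lemma exists_two_mul_mul_le_matOnes {d n : ℕ} (h : d + 5 < invAck n) :
    ∃ B : Fin n → Fin n → Bool, ¬ MatContains B (DS 4) ∧ 2 * n * d ≤ matOnes B := by
  obtain ⟨R, C, _, _, _, _, M, hM, hμ, hRC, hC, hsize⟩ := exists_alternationFree d
  have hCn : Nat.card C * (d + 1) ≤ n := hsize.trans (alphaInv_four_le_of_lt_invAck (by lia) h)
  set k := n / Nat.card C
  have hcard (α : Type) : Nat.card (Fin k ×ₗ α) = k * Nat.card α := by
    rw [Nat.card_congr (ofLex : Fin k ×ₗ α ≃ Fin k × α), Nat.card_prod, Nat.card_fin]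
  have hkC : k * Nat.card C ≤ n := Nat.div_mul_le_self n _
  have hkR : k * Nat.card R ≤ n := (Nat.mul_le_mul_left k hRC).trans hkC
  have hfin (α : Type) [Finite α] : Finite (Fin k ×ₗ α) := inferInstanceAs (Finite (Fin k × α))
  obtain ⟨B, hB, hle⟩ := (hM.blockDiag (ι := Fin k)).exists_matrix ((hcard R).trans_le hkR)
    ((hcard C).trans_le hkC) fun c => (hμ _).trans_eq (ncard_column_blockDiag c).symm
  refine ⟨B, hB, le_trans ?_ hle⟩
  have hn : n < k * Nat.card C + Nat.card C := Nat.lt_div_mul_add hC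
  rw [hcard]
  nlinarith

lemma not_matContains_DS_four_false {m n : ℕ} :
    ¬ MatContains (fun (_ : Fin m) (_ : Fin n) => false) (DS 4) := by
  rintro ⟨r, c, -, -, h⟩
  exact Bool.false_ne_true (h 0 1 (by decide))

theorem p3_lower_bound_general :
    ∃ C : ℝ, ∀ n : ℕ, ∃ M : Fin n → Fin n → Bool, ¬ MatContains M (DS 4) ∧
      2 * (n : ℝ) * (invAck n : ℝ) - C * (n : ℝ) ≤ (matOnes M : ℝ) := by
  refine ⟨12, fun n => ?_⟩
  obtain ⟨M, hM, hle⟩ : ∃ M : Fin n → Fin n → Bool, ¬ MatContains M (DS 4) ∧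
      2 * n * (invAck n - 6) ≤ matOnes M := by
    rcases (invAck n - 6).eq_zero_or_pos with h | h
    · exact ⟨fun _ _ => false, not_matContains_DS_four_false, by simp [h]⟩
    · exact exists_two_mul_mul_le_matOnes (by lia)
  refine ⟨M, hM, ?_⟩
  calc 2 * (n : ℝ) * invAck n - 12 * n = 2 * n * (invAck n - (6 : ℕ)) := by push_cast; ring
    _ ≤ 2 * n * (invAck n - 6 : ℕ) := by gcongr; exact sub_le_iff_le_add.2 (mod_cast le_tsub_add)
    _ ≤ matOnes M := mod_cast hle

/-- There is a constant `C` such that for every `n ≥ 1` there is an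
`n × n` (0,1)-matrix that is not 4-full with at least `2·n·α(n) − C·n` `1`-entries. -/
theorem p3_lower_bound :
    ∃ C : ℝ, ∀ n : ℕ, 1 ≤ n →
      ∃ M : Fin n → Fin n → Bool, ¬ IsFull 4 M ∧
        2 * (n : ℝ) * (invAck n : ℝ) - C * (n : ℝ) ≤ (matOnes M : ℝ) := by
  obtain ⟨C, hC⟩ := p3_lower_bound_general
  exact ⟨C, fun n _ => (hC n).imp fun M hM => ⟨fun h => hM.1 h.matContains_DS_four, hM.2⟩⟩
end
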